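/- arXiv:1605.06985 — 8 statements merged into one kernel-verified Lean document; each statement's English description precedes it below -/
import Mathlib

section
/- Let D > 0, let F : [0, D) → ℝ be C¹ with F' ≥ 0 on [0,D), and let r : ℂ² → ℝ be convex and Fréchet-differentiable. Define ρ(z) = F(|z₁|²) + r(z) for z = (z₁,z₂) with |z₁|² < D. Then for all ζ, z ∈ ℂ² with |ζ₁|² < D and |z₁|² < D: 2 Re Φ(ζ,z) ≥ ρ(ζ) − ρ(z) + F'(|ζ₁|²)·|z₁ − ζ₁|² + [ F(|z₁|²) − F(|ζ₁|²) − F'(|ζ₁|²)·(|z₁|² − |ζ₁|²) ]. -/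
open Complex Set

/-- The Wirtinger derivative `∂g/∂z₁` of a real-valued function `g` on `ℂ²`. -/
noncomputable def wirt1 (g : ℂ × ℂ → ℝ) (ζ : ℂ × ℂ) : ℂ :=
  (1 / 2 : ℂ) * (((fderiv ℝ g ζ) (1, 0) : ℝ) - Complex.I * ((fderiv ℝ g ζ) (Complex.I, 0) : ℝ))

/-- The Wirtinger derivative `∂g/∂z₂`. -/
noncomputable def wirt2 (g : ℂ × ℂ → ℝ) (ζ : ℂ × ℂ) : ℂ :=
  (1 / 2 : ℂ) * (((fderiv ℝ g ζ) (0, 1) : ℝ) - Complex.I * ((fderiv ℝ g ζ) (0, Complex.I) : ℝ))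

/-- The support function `Φ(ζ,z) = Σ_{j=1}^{2} (∂g/∂ζ_j)(ζ)·(ζ_j − z_j)`. -/
noncomputable def suppFn (g : ℂ × ℂ → ℝ) (ζ z : ℂ × ℂ) : ℂ :=
  wirt1 g ζ * (ζ.1 - z.1) + wirt2 g ζ * (ζ.2 - z.2)

/-- for `F` C¹ on `[0,D)` with `F' ≥ 0`, `r` convex differentiable, and
`ρ(z) = F(|z₁|²) + r(z)`, the support function `Φ` of `ρ` satisfies
`2 Re Φ(ζ,z) ≥ ρ(ζ) − ρ(z) + F'(|ζ₁|²)|z₁−ζ₁|² + [F(|z₁|²) − F(|ζ₁|²) − F'(|ζ₁|²)(|z₁|²−|ζ₁|²)]`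
whenever `|ζ₁|² < D` and `|z₁|² < D`. -/
theorem stmt1 (D : ℝ) (hD : 0 < D) (F : ℝ → ℝ)
    (hF : ContDiffOn ℝ 1 F (Set.Ico 0 D))
    (F' : ℝ → ℝ) (hF' : ∀ t ∈ Set.Ico 0 D, HasDerivWithinAt F (F' t) (Set.Ico 0 D) t)
    (hF'nonneg : ∀ t ∈ Set.Ico 0 D, 0 ≤ F' t)
    (r : ℂ × ℂ → ℝ) (hconv : ConvexOn ℝ Set.univ r) (hdiff : Differentiable ℝ r)
    (ρ : ℂ × ℂ → ℝ) (hρ : ∀ z : ℂ × ℂ, ρ z = F (‖z.1‖ ^ 2) + r z)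
    (ζ z : ℂ × ℂ) (hζ : ‖ζ.1‖ ^ 2 < D) (hz : ‖z.1‖ ^ 2 < D) :
    2 * (suppFn ρ ζ z).re ≥
      ρ ζ - ρ z + F' (‖ζ.1‖ ^ 2) * ‖z.1 - ζ.1‖ ^ 2 +
        (F (‖z.1‖ ^ 2) - F (‖ζ.1‖ ^ 2) -
          F' (‖ζ.1‖ ^ 2) * (‖z.1‖ ^ 2 - ‖ζ.1‖ ^ 2)) := by
  have hmem : ‖ζ.1‖ ^ 2 ∈ Set.Ico 0 D := ⟨by positivity, hζ⟩
  have hn : HasFDerivAt (fun w : ℂ × ℂ => ‖w.1‖ ^ 2)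
      (2 • (innerSL ℝ ζ.1).comp (ContinuousLinearMap.fst ℝ ℂ ℂ)) ζ :=
    (hasFDerivAt_fst (𝕜 := ℝ) (p := ζ)).norm_sq
  have hnb : (fun w : ℂ × ℂ => ‖w.1‖ ^ 2) ⁻¹' Set.Ico 0 D ∈ nhds ζ := by
    have : ∀ᶠ w : ℂ × ℂ in nhds ζ, ‖w.1‖ ^ 2 < D :=
      hn.continuousAt.eventually (gt_mem_nhds hζ)
    filter_upwards [this] with w hw
    exact ⟨by positivity, hw⟩
  have hFn := ((hF' _ hmem).comp_hasFDerivWithinAt ζ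
    (hn.hasFDerivWithinAt (s := (fun w : ℂ × ℂ => ‖w.1‖ ^ 2) ⁻¹' Set.Ico 0 D))
    (fun w hw => hw)).hasFDerivAt hnb
  have hρd := hFn.add (hdiff ζ).hasFDerivAt
  have hρe : ρ = (F ∘ fun w : ℂ × ℂ => ‖w.1‖ ^ 2) + r := by
    funext w; simp [hρ]
  rw [← hρe] at hρd
  have key : 2 * (suppFn ρ ζ z).re = fderiv ℝ ρ ζ (ζ - z) := by
    have hdec : ζ - z = (ζ.1.re - z.1.re) • ((1, 0) : ℂ × ℂ) + (ζ.1.im - z.1.im) • ((I, 0) : ℂ × ℂ)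
        + (ζ.2.re - z.2.re) • ((0, 1) : ℂ × ℂ) + (ζ.2.im - z.2.im) • ((0, I) : ℂ × ℂ) := by
      ext <;> simp <;> apply Complex.ext <;> simp
    rw [hdec]
    simp only [map_add, map_smul, smul_eq_mul]
    simp [suppFn, wirt1, wirt2]
    ring
  have hconv' : r ζ - r z ≤ fderiv ℝ r ζ (ζ - z) := by
    have hg : ConvexOn ℝ Set.univ (r ∘ AffineMap.lineMap (k := ℝ) ζ z) := by
      simpa using hconv.comp_affineMap (AffineMap.lineMap (k := ℝ) ζ z)
    have h0 : HasDerivAt (r ∘ AffineMap.lineMap (k := ℝ) ζ z) (fderiv ℝ r ζ (z - ζ)) 0 := by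
      have h1 : HasDerivAt (AffineMap.lineMap (k := ℝ) ζ z) (z - ζ) (0 : ℝ) :=
        AffineMap.hasDerivAt_lineMap
      refine HasFDerivAt.comp_hasDerivAt (0 : ℝ) ?_ h1
      simpa using (hdiff ζ).hasFDerivAt
    have h2 := hg.le_slope_of_hasDerivAt (mem_univ 0) (mem_univ 1) one_pos h0
    simp [slope_def_field] at h2
    simp only [map_sub]
    linarith
  rw [key, hρd.fderiv, hρ, hρ]
  have e : 2 * inner ℝ ζ.1 (ζ.1 - z.1) = ‖ζ.1‖ ^ 2 + ‖z.1 - ζ.1‖ ^ 2 - ‖z.1‖ ^ 2 := by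
    simp only [← Complex.normSq_eq_norm_sq, Complex.normSq_apply, Complex.inner]
    simp
    ring
  have e2 : (F' (‖ζ.1‖ ^ 2) • (2 • (innerSL ℝ ζ.1).comp (ContinuousLinearMap.fst ℝ ℂ ℂ))
      + fderiv ℝ r ζ) (ζ - z)
      = F' (‖ζ.1‖ ^ 2) * (2 * inner ℝ ζ.1 (ζ.1 - z.1)) + fderiv ℝ r ζ (ζ - z) := by
    rw [two_smul, two_mul]; rfl
  rw [e2, e]
  linarith
end

section
/- Let d > 0 and let F : [0, d] → ℝ be C² with F(0) = 0, F'(0) = 0, and F'' nondecreasing on [0, d]. Then for all 0 ≤ b ≤ a ≤ d: F(a) − F(b) − F'(b)·(a − b) ≥ F(a − b). -/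
open Set

theorem aux_nonneg (c : ℝ) (g g' : ℝ → ℝ) (h0 : g 0 = 0)
    (hg : ∀ t ∈ Set.Icc 0 c, HasDerivWithinAt g (g' t) (Set.Icc 0 c) t)
    (hn : ∀ t ∈ Set.Icc 0 c, 0 ≤ g' t) : ∀ t ∈ Set.Icc 0 c, 0 ≤ g t := by
  intro t ht
  have hm : MonotoneOn g (Set.Icc 0 c) := by
    apply monotoneOn_of_hasDerivWithinAt_nonneg (f' := g') (convex_Icc 0 c)
    · exact fun x hx => (hg x hx).continuousWithinAt
    · exact fun x hx => (hg x (interior_subset hx)).mono interior_subset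
    · exact fun x hx => hn x (interior_subset hx)
  have := hm ⟨le_refl 0, ht.1.trans ht.2⟩ ht ht.1
  linarith

theorem aux_shift (d b : ℝ) (hb : 0 ≤ b) (f f' : ℝ → ℝ)
    (hf : ∀ t ∈ Set.Icc 0 d, HasDerivWithinAt f (f' t) (Set.Icc 0 d) t) :
    ∀ t ∈ Set.Icc 0 (d - b),
      HasDerivWithinAt (fun t => f (b + t) - f t) (f' (b + t) - f' t) (Set.Icc 0 (d - b)) t := by
  intro t ht
  have h1 := hf (b + t) ⟨by linarith [ht.1], by linarith [ht.2]⟩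
  have h2 := hf t ⟨ht.1, by linarith [ht.2]⟩
  have h3 : HasDerivWithinAt (fun t : ℝ => b + t) 1 (Set.Icc 0 (d - b)) t :=
    (hasDerivWithinAt_id t _).const_add b
  have h4 := HasDerivWithinAt.comp t h1 h3
    (fun x hx => ⟨by linarith [hx.1], by linarith [hx.2]⟩)
  rw [mul_one] at h4
  exact h4.sub (h2.mono (Set.Icc_subset_Icc_right (by linarith)))

/-- if `F` is C² on `[0,d]` with `F(0) = 0`, `F'(0) = 0` and `F''` nondecreasing
on `[0,d]`, then `F(a) − F(b) − F'(b)(a−b) ≥ F(a−b)` for all `0 ≤ b ≤ a ≤ d`. -/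
theorem stmt2 (d : ℝ) (hd : 0 < d) (F F' F'' : ℝ → ℝ)
    (hF : ContDiffOn ℝ 2 F (Set.Icc 0 d))
    (hF' : ∀ t ∈ Set.Icc 0 d, HasDerivWithinAt F (F' t) (Set.Icc 0 d) t)
    (hF'' : ∀ t ∈ Set.Icc 0 d, HasDerivWithinAt F' (F'' t) (Set.Icc 0 d) t)
    (hF0 : F 0 = 0) (hF'0 : F' 0 = 0)
    (hmono : MonotoneOn F'' (Set.Icc 0 d)) :
    ∀ a b : ℝ, 0 ≤ b → b ≤ a → a ≤ d →
      F a - F b - F' b * (a - b) ≥ F (a - b) := by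
  intro a b hb hba had
  have key : ∀ t ∈ Set.Icc 0 (d - b), 0 ≤ F' (b + t) - F' t - F' b := by
    apply aux_nonneg (d - b) (fun t => F' (b + t) - F' t - F' b) (fun t => F'' (b + t) - F'' t)
    · simp [hF'0]
    · intro t ht
      exact (aux_shift d b hb F' F'' hF'' t ht).sub_const _
    · intro t ht
      have := hmono (a := t) (b := b + t) ⟨ht.1, by linarith [ht.2]⟩
        ⟨by linarith [ht.1], by linarith [ht.2]⟩ (by linarith)
      simpa using this
  have key2 := aux_nonneg (d - b) (fun t => F (b + t) - F t - F b - F' b * t)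
    (fun t => F' (b + t) - F' t - F' b) (by simp [hF0])
    (by
      intro t ht
      have h := ((aux_shift d b hb F F' hF' t ht).sub_const (F b)).sub
        ((hasDerivWithinAt_id t (Set.Icc 0 (d - b))).const_mul (F' b))
      rw [mul_one] at h
      exact h) key (a - b) ⟨by linarith, by linarith⟩
  simp only [add_sub_cancel] at key2
  linarith
end

section
/- Let d > 0 and let F : [0, d] → ℝ be C² with F(0) = 0, F'(0) = 0, F' ≥ 0 on [0,d], and F'' nondecreasing on [0, d]. Then for all 0 ≤ b ≤ a/2 with a ≤ d: F(a) − F(b) − F'(b)·(a − b) ≥ F(a/2). In particular, if ζ₁, z₁ ∈ ℂ satisfy |ζ₁| ≤ (1/√2)|z₁| and |z₁|² ≤ d, then F(|z₁|²) − F(|ζ₁|²) − F'(|ζ₁|²)·(|z₁|² − |ζ₁|²) ≥ F(|z₁|²/2). -/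
open Set

lemma mono_aux (c : ℝ) (f f' : ℝ → ℝ)
    (h : ∀ t ∈ Set.Icc 0 c, HasDerivWithinAt f (f' t) (Set.Icc 0 c) t)
    (h0 : ∀ t ∈ Set.Icc 0 c, 0 ≤ f' t) : MonotoneOn f (Set.Icc 0 c) := by
  refine monotoneOn_of_hasDerivWithinAt_nonneg (f' := f') (convex_Icc 0 c)
    (fun t ht => (h t ht).continuousWithinAt) ?_ ?_
  · intro t ht
    exact (h t (interior_subset ht)).mono interior_subset
  · intro t ht
    exact h0 t (interior_subset ht)

lemma shift_aux (d b c : ℝ) (hb : 0 ≤ b) (hbc : b + c ≤ d) (f f' : ℝ → ℝ)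
    (h : ∀ t ∈ Set.Icc 0 d, HasDerivWithinAt f (f' t) (Set.Icc 0 d) t) :
    ∀ t ∈ Set.Icc 0 c, HasDerivWithinAt (fun t => f (b + t)) (f' (b + t)) (Set.Icc 0 c) t := by
  intro t ht
  have hm : MapsTo (fun t => b + t) (Set.Icc 0 c) (Set.Icc 0 d) := by
    intro x hx
    exact ⟨by linarith [hx.1], by linarith [hx.2]⟩
  have h1 : HasDerivWithinAt (fun t : ℝ => b + t) 1 (Set.Icc 0 c) t :=
    (hasDerivWithinAt_id t _).const_add b
  have h2 := (h (b + t) (hm ht)).comp t h1 hm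
  simpa [Function.comp_def] using h2

/-- if `F` is C² on `[0,d]` with `F(0) = 0`, `F'(0) = 0`, `F' ≥ 0`, and `F''`
nondecreasing on `[0,d]`, then `F(a) − F(b) − F'(b)(a−b) ≥ F(a/2)` for all `0 ≤ b ≤ a/2`
with `a ≤ d`.  In particular, for `ζ₁, z₁ ∈ ℂ` with `|ζ₁| ≤ |z₁|/√2` and `|z₁|² ≤ d`,
`F(|z₁|²) − F(|ζ₁|²) − F'(|ζ₁|²)(|z₁|² − |ζ₁|²) ≥ F(|z₁|²/2)`. -/
theorem stmt3 (d : ℝ) (hd : 0 < d) (F F' F'' : ℝ → ℝ)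
    (hF : ContDiffOn ℝ 2 F (Set.Icc 0 d))
    (hF' : ∀ t ∈ Set.Icc 0 d, HasDerivWithinAt F (F' t) (Set.Icc 0 d) t)
    (hF'' : ∀ t ∈ Set.Icc 0 d, HasDerivWithinAt F' (F'' t) (Set.Icc 0 d) t)
    (hF0 : F 0 = 0) (hF'0 : F' 0 = 0)
    (hF'nonneg : ∀ t ∈ Set.Icc 0 d, 0 ≤ F' t)
    (hmono : MonotoneOn F'' (Set.Icc 0 d)) :
    (∀ a b : ℝ, 0 ≤ b → b ≤ a / 2 → a ≤ d →
        F a - F b - F' b * (a - b) ≥ F (a / 2)) ∧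
      (∀ ζ₁ z₁ : ℂ, ‖ζ₁‖ ≤ (1 / Real.sqrt 2) * ‖z₁‖ →
        ‖z₁‖ ^ 2 ≤ d →
        F (‖z₁‖ ^ 2) - F (‖ζ₁‖ ^ 2) -
            F' (‖ζ₁‖ ^ 2) * (‖z₁‖ ^ 2 - ‖ζ₁‖ ^ 2) ≥
          F (‖z₁‖ ^ 2 / 2)) := by
  have main : ∀ a b : ℝ, 0 ≤ b → b ≤ a / 2 → a ≤ d →
      F a - F b - F' b * (a - b) ≥ F (a / 2) := by
    intro a b hb hba had
    have hsub : Set.Icc 0 (a - b) ⊆ Set.Icc 0 d := Set.Icc_subset_Icc le_rfl (by linarith)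
    have h0 : (0 : ℝ) ∈ Set.Icc 0 (a - b) := ⟨le_rfl, by linarith⟩
    have m1 : MonotoneOn (fun t => F' (b + t) - F' t) (Set.Icc 0 (a - b)) := by
      refine mono_aux _ _ (fun t => F'' (b + t) - F'' t) ?_ ?_
      · intro t ht
        exact (shift_aux d b (a - b) hb (by linarith) F' F'' hF'' t ht).sub
          ((hF'' t (hsub ht)).mono hsub)
      · intro t ht
        have := hmono (hsub ht) (b := b + t) ⟨by linarith [ht.1], by linarith [ht.2]⟩
          (by linarith)
        simpa using this
    have m2 : MonotoneOn (fun t => F (b + t) - F t - F' b * t) (Set.Icc 0 (a - b)) := by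
      refine mono_aux _ _ (fun t => F' (b + t) - F' t - F' b * 1) ?_ ?_
      · intro t ht
        exact ((shift_aux d b (a - b) hb (by linarith) F F' hF' t ht).sub
          ((hF' t (hsub ht)).mono hsub)).sub ((hasDerivWithinAt_id t _).const_mul (F' b))
      · intro t ht
        have := m1 h0 ht ht.1
        simp only [add_zero, hF'0] at this
        linarith
    have m3 := mono_aux d F F' hF' hF'nonneg
    have k1 := m2 h0 (b := a - b) ⟨by linarith, le_rfl⟩ (by linarith)
    have k2 := m3 (a := a / 2) (b := a - b) ⟨by linarith, by linarith⟩
      ⟨by linarith, by linarith⟩ (by linarith)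
    simp only [add_zero, hF0, add_sub_cancel] at k1
    linarith
  refine ⟨main, ?_⟩
  intro ζ z h hz
  refine main _ _ (by positivity) ?_ hz
  calc ‖ζ‖ ^ 2 ≤ ((1 / Real.sqrt 2) * ‖z‖) ^ 2 := by gcongr
    _ = ‖z‖ ^ 2 / 2 := by
      rw [mul_pow, div_pow, Real.sq_sqrt (by norm_num)]
      ring
end

section
/- Let D > 0, let F : [0, D) → ℝ be C³ with F(0) = 0, F'(0) = 0, and F'(t), F''(t), F'''(t), and (F(t)/t)' all nonnegative on (0, D), and let r : ℂ² → ℝ be convex and Fréchet-differentiable. Define ρ(z) = F(|z₁|²) + r(z) for |z₁|² < D, and fix d with d² < D. Then for each k ∈ {1, 2} there is a constant c > 0 such that: for all ζ, z ∈ ℂ² with |ζ₁| ≤ d, |z₁| ≤ d, ρ(ζ) − ρ(z) ≥ 0, and |ζ₁| ≥ |z₁ − ζ₁|, one has |Φ(ζ,z)|^k · |z − ζ| ≥ c·[ |Im Φ(ζ,z)| + ρ(ζ) − ρ(z) + F(|z₁ − ζ₁|²) ]^k · |z₁ − ζ₁|. -/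
open Complex Set

/-- The Euclidean norm on `ℂ²`. -/
noncomputable def eNorm (w : ℂ × ℂ) : ℝ :=
  Real.sqrt (‖w.1‖ ^ 2 + ‖w.2‖ ^ 2)


lemma tangent_aux {S : Set ℝ} {f : ℝ → ℝ} (hf : ConvexOn ℝ S f) {a b f' : ℝ}
    (ha : a ∈ S) (hb : b ∈ S) (h : HasDerivAt f f' a) : f a + f' * (b - a) ≤ f b := by
  rcases lt_trichotomy a b with hab | hab | hab
  · have := hf.le_slope_of_hasDerivAt ha hb hab h
    rw [slope_def_field, le_div_iff₀ (by linarith)] at this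
    linarith
  · subst hab; simp
  · have := hf.slope_le_of_hasDerivAt hb ha hab h
    rw [slope_def_field, div_le_iff₀ (by linarith)] at this
    linarith

lemma tangent_r {r : ℂ × ℂ → ℝ} (hconv : ConvexOn ℝ Set.univ r) (hdiff : Differentiable ℝ r)
    (ζ z : ℂ × ℂ) : r ζ - r z ≤ fderiv ℝ r ζ (ζ - z) := by
  have h1 : ConvexOn ℝ Set.univ (fun t : ℝ => r (AffineMap.lineMap ζ z t)) :=
    hconv.comp_affineMap (AffineMap.lineMap ζ z : ℝ →ᵃ[ℝ] ℂ × ℂ)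
  have h2 : HasDerivAt (fun t : ℝ => r (AffineMap.lineMap ζ z t)) (fderiv ℝ r ζ (z - ζ)) 0 := by
    have h3 : HasDerivAt (fun t : ℝ => (AffineMap.lineMap ζ z t : ℂ × ℂ)) (z - ζ) 0 :=
      AffineMap.hasDerivAt_lineMap
    have h4 : HasFDerivAt r (fderiv ℝ r ζ) (AffineMap.lineMap ζ z (0:ℝ) : ℂ × ℂ) := by
      simpa using (hdiff ζ).hasFDerivAt
    exact h4.comp_hasDerivAt _ h3
  have h5 := tangent_aux h1 (mem_univ 0) (mem_univ 1) h2
  have h6 : ζ - z = -(z - ζ) := by abel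
  rw [h6, map_neg]
  simp at h5
  simp
  linarith

lemma re_suppFn (g : ℂ × ℂ → ℝ) (ζ z : ℂ × ℂ) :
    2 * (suppFn g ζ z).re = fderiv ℝ g ζ (ζ - z) := by
  set L := fderiv ℝ g ζ with hL
  set w := ζ - z with hw
  have h : w = w.1.re • ((1, 0) : ℂ × ℂ) + w.1.im • ((Complex.I, 0) : ℂ × ℂ)
      + w.2.re • ((0, 1) : ℂ × ℂ) + w.2.im • ((0, Complex.I) : ℂ × ℂ) := by
    apply Prod.ext <;> apply Complex.ext <;> simp
  have e1 : ζ.1 - z.1 = w.1 := rfl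
  have e2 : ζ.2 - z.2 = w.2 := rfl
  conv_rhs => rw [h]
  simp only [map_add, map_smul, suppFn, wirt1, wirt2, ← hL, e1, e2, smul_eq_mul]
  simp [Complex.add_re, Complex.mul_re, Complex.mul_im]
  ring

lemma fderiv_rho {D : ℝ} {F : ℝ → ℝ} {f' : ℝ} {r ρ : ℂ × ℂ → ℝ} (hdiff : Differentiable ℝ r)
    (hρ : ∀ z : ℂ × ℂ, ‖z.1‖ ^ 2 < D → ρ z = F (‖z.1‖ ^ 2) + r z) (ζ v : ℂ × ℂ)
    (hζ : ‖ζ.1‖ ^ 2 < D) (h : HasDerivAt F f' (‖ζ.1‖ ^ 2)) :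
    fderiv ℝ ρ ζ v = f' * (2 * inner ℝ ζ.1 v.1) + fderiv ℝ r ζ v := by
  have h1 : HasFDerivAt (fun z : ℂ × ℂ => z.1) (ContinuousLinearMap.fst ℝ ℂ ℂ) ζ :=
    hasFDerivAt_fst
  have h2 := h1.norm_sq
  have h3 := (h.comp_hasFDerivAt ζ h2).add (hdiff ζ).hasFDerivAt
  have h4 : ρ =ᶠ[nhds ζ] ((F ∘ fun z : ℂ × ℂ => ‖z.1‖ ^ 2) + r) := by
    have : ∀ᶠ z : ℂ × ℂ in nhds ζ, ‖z.1‖ ^ 2 < D :=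
      (continuous_fst.norm.pow 2).continuousAt.eventually_lt continuousAt_const hζ
    filter_upwards [this] with z hz
    simp [hρ z hz]
  rw [(h3.congr_of_eventuallyEq h4).fderiv]
  simp
  left
  ring

lemma key_bound (D : ℝ) (F F' F'' : ℝ → ℝ)
    (hF' : ∀ t ∈ Set.Ico 0 D, HasDerivWithinAt F (F' t) (Set.Ico 0 D) t)
    (hF'' : ∀ t ∈ Set.Ico 0 D, HasDerivWithinAt F' (F'' t) (Set.Ico 0 D) t)
    (hF0 : F 0 = 0)
    (hF'pos : ∀ t ∈ Set.Ioo 0 D, 0 ≤ F' t)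
    (hF''pos : ∀ t ∈ Set.Ioo 0 D, 0 ≤ F'' t)
    (a b s : ℝ) (ha : a < D) (hb0 : 0 ≤ b) (hb : b < D) (hs : 0 < s) (hsa : s ≤ a) :
    0 ≤ F s ∧ F s ≤ F b - F a - F' a * (b - a) + F' a * s ∧ HasDerivAt F (F' a) a := by
  have hnt : ∀ t, 0 < t → t < D → HasDerivAt F (F' t) t := fun t h0 h1 =>
    (hF' t ⟨h0.le, h1⟩).hasDerivAt (Ico_mem_nhds h0 h1)
  have hcF : ContinuousOn F (Ico 0 D) := fun t ht => (hF' t ht).continuousWithinAt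
  have hcF' : ContinuousOn F' (Ico 0 D) := fun t ht => (hF'' t ht).continuousWithinAt
  have hmF : MonotoneOn F (Ico 0 D) := by
    apply monotoneOn_of_hasDerivWithinAt_nonneg (convex_Ico 0 D) hcF (f' := F')
    · intro x hx
      exact (hF' x (interior_subset hx)).mono interior_subset
    · rw [interior_Ico]; exact hF'pos
  have hmF' : MonotoneOn F' (Ico 0 D) := by
    apply monotoneOn_of_hasDerivWithinAt_nonneg (convex_Ico 0 D) hcF' (f' := F'')
    · intro x hx
      exact (hF'' x (interior_subset hx)).mono interior_subset
    · rw [interior_Ico]; exact hF''pos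
  have hcx : ConvexOn ℝ (Ico 0 D) F := by
    apply convexOn_of_hasDerivWithinAt2_nonneg (convex_Ico 0 D) hcF (f' := F') (f'' := F'')
    · intro x hx
      exact (hF' x (interior_subset hx)).mono interior_subset
    · intro x hx
      exact (hF'' x (interior_subset hx)).mono interior_subset
    · rw [interior_Ico]; exact hF''pos
  have m0 : (0:ℝ) ∈ Ico 0 D := ⟨le_rfl, by linarith⟩
  have ms : s ∈ Ico 0 D := ⟨hs.le, by linarith⟩
  have ma : a ∈ Ico 0 D := ⟨by linarith, by linarith⟩
  have mb : b ∈ Ico 0 D := ⟨hb0, hb⟩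
  have hda := hnt a (by linarith) ha
  refine ⟨hF0 ▸ hmF m0 ms hs.le, ?_, hda⟩
  have t1 := tangent_aux hcx ma mb hda
  have t2 := tangent_aux hcx ms m0 (hnt s hs ms.2)
  have t3 := mul_le_mul_of_nonneg_right (hmF' ms ma hsa) hs.le
  rw [hF0] at t2
  linarith

/-- Lemma 2.2, first case: lower bound for the support function of
`ρ(z) = F(|z₁|²) + r(z)` when `|ζ₁| ≥ |z₁ − ζ₁|`. -/
theorem stmt5 (D : ℝ) (hD : 0 < D) (F F' F'' F''' : ℝ → ℝ)
    (hF : ContDiffOn ℝ 3 F (Set.Ico 0 D))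
    (hF' : ∀ t ∈ Set.Ico 0 D, HasDerivWithinAt F (F' t) (Set.Ico 0 D) t)
    (hF'' : ∀ t ∈ Set.Ico 0 D, HasDerivWithinAt F' (F'' t) (Set.Ico 0 D) t)
    (hF''' : ∀ t ∈ Set.Ico 0 D, HasDerivWithinAt F'' (F''' t) (Set.Ico 0 D) t)
    (hF0 : F 0 = 0) (hF'0 : F' 0 = 0)
    (hF'pos : ∀ t ∈ Set.Ioo 0 D, 0 ≤ F' t)
    (hF''pos : ∀ t ∈ Set.Ioo 0 D, 0 ≤ F'' t)
    (hF'''pos : ∀ t ∈ Set.Ioo 0 D, 0 ≤ F''' t)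
    (hquot : ∀ t ∈ Set.Ioo 0 D, 0 ≤ deriv (fun s => F s / s) t)
    (r : ℂ × ℂ → ℝ) (hconv : ConvexOn ℝ Set.univ r) (hdiff : Differentiable ℝ r)
    (ρ : ℂ × ℂ → ℝ)
    (hρ : ∀ z : ℂ × ℂ, ‖z.1‖ ^ 2 < D → ρ z = F (‖z.1‖ ^ 2) + r z)
    (d : ℝ) (hd : d ^ 2 < D) (k : ℕ) (hk : k = 1 ∨ k = 2) :
    ∃ c > (0 : ℝ), ∀ ζ z : ℂ × ℂ,
      ‖ζ.1‖ ≤ d → ‖z.1‖ ≤ d → 0 ≤ ρ ζ - ρ z →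
      ‖z.1 - ζ.1‖ ≤ ‖ζ.1‖ →
      ‖suppFn ρ ζ z‖ ^ k * eNorm (z - ζ) ≥
        c * (|(suppFn ρ ζ z).im| + ρ ζ - ρ z + F (‖z.1 - ζ.1‖ ^ 2)) ^ k *
          ‖z.1 - ζ.1‖ := by
  refine ⟨(1 / 4) ^ k, by positivity, ?_⟩
  intro ζ z hζ hz hpos hle
  have hE : ‖z.1 - ζ.1‖ ≤ eNorm (z - ζ) := by
    apply Real.le_sqrt_of_sq_le
    simp only [Prod.fst_sub]
    nlinarith [sq_nonneg ‖(z - ζ).2‖]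
  rcases (norm_nonneg (z.1 - ζ.1)).eq_or_lt with h0 | h0
  · rw [← h0] at hE ⊢
    rw [mul_zero]
    positivity
  have hζ2 : ‖ζ.1‖ ^ 2 < D := lt_of_le_of_lt (pow_le_pow_left₀ (norm_nonneg _) hζ 2) hd
  have hz2 : ‖z.1‖ ^ 2 < D := lt_of_le_of_lt (pow_le_pow_left₀ (norm_nonneg _) hz 2) hd
  obtain ⟨k1, k2, k3⟩ := key_bound D F F' F'' hF' hF'' hF0 hF'pos hF''pos (‖ζ.1‖ ^ 2) (‖z.1‖ ^ 2)
    (‖z.1 - ζ.1‖ ^ 2) hζ2 (by positivity) hz2 (by positivity)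
    (pow_le_pow_left₀ (norm_nonneg _) hle 2)
  have hre := re_suppFn ρ ζ z
  rw [fderiv_rho hdiff hρ ζ _ hζ2 k3] at hre
  have hr := tangent_r hconv hdiff ζ z
  have hin : 2 * inner ℝ ζ.1 (ζ - z).1 = ‖z.1 - ζ.1‖ ^ 2 - (‖z.1‖ ^ 2 - ‖ζ.1‖ ^ 2) := by
    rw [norm_sub_sq_real, Prod.fst_sub, inner_sub_right, real_inner_self_eq_norm_sq,
      real_inner_comm]
    ring
  rw [hin] at hre
  have e1 := hρ ζ hζ2
  have e2 := hρ z hz2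
  have hRe : ρ ζ - ρ z + F (‖z.1 - ζ.1‖ ^ 2) ≤ 2 * (suppFn ρ ζ z).re := by
    rw [hre, e1, e2]; linarith
  have a1 := Complex.abs_re_le_norm (suppFn ρ ζ z)
  have a2 := Complex.abs_im_le_norm (suppFn ρ ζ z)
  have a3 := le_abs_self (suppFn ρ ζ z).re
  have a4 := abs_nonneg (suppFn ρ ζ z).im
  have hB0 : 0 ≤ |(suppFn ρ ζ z).im| + ρ ζ - ρ z + F (‖z.1 - ζ.1‖ ^ 2) := by linarith
  have hB : 1 / 4 * (|(suppFn ρ ζ z).im| + ρ ζ - ρ z + F (‖z.1 - ζ.1‖ ^ 2)) ≤ ‖suppFn ρ ζ z‖ := by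
    linarith
  rw [ge_iff_le, ← mul_pow]
  exact mul_le_mul (pow_le_pow_left₀ (by positivity) hB k) hE h0.le (by positivity)
end

section
/- Let d > 0 and let F : [0, d²] → [0, ∞) be nondecreasing with F(t) > 0 for t > 0. If ∫₀^d |log t · log F(t²)| dt < ∞, then for every δ ∈ (0, min(d, 1)) the triple integral ∫₀^δ ∫₀^δ ∫₀^δ 1/( (t + F(x²))·(x + y) ) dy dt dx is finite. -/
open MeasureTheory Set ENNReal

theorem aux_int (a δ : ℝ) (ha : 0 < a) (hδ : 0 < δ) :
    ∫⁻ y in Set.Ioc (0 : ℝ) δ, ENNReal.ofReal (1 / (y + a))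
      = ENNReal.ofReal (Real.log ((δ + a) / a)) := by
  have hc : ContinuousOn (fun y : ℝ => 1 / (y + a)) (Set.Icc 0 δ) := by
    apply ContinuousOn.div continuousOn_const (by fun_prop)
    intro y hy
    have := hy.1
    positivity
  have hi : IntegrableOn (fun y : ℝ => 1 / (y + a)) (Set.Ioc 0 δ) :=
    (hc.integrableOn_Icc).mono_set Set.Ioc_subset_Icc_self
  rw [← ofReal_integral_eq_lintegral_ofReal hi]
  · rw [← intervalIntegral.integral_of_le hδ.le]
    rw [intervalIntegral.integral_comp_add_right (fun y => 1 / y) a]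
    rw [integral_one_div_of_pos (by linarith) (by linarith)]
    simp
  · filter_upwards [ae_restrict_mem measurableSet_Ioc] with y hy
    have := hy.1
    simp only [Pi.zero_apply]
    positivity

/-- if `F : [0,d²] → [0,∞)` is nondecreasing, positive for positive
arguments, and `∫₀^d |log t · log F(t²)| dt < ∞`, then for each `δ ∈ (0, min d 1)` the
triple integral `∫₀^δ ∫₀^δ ∫₀^δ 1/((t + F(x²))(x + y)) dy dt dx` is finite. -/
theorem stmt10 (d : ℝ) (hd : 0 < d) (F : ℝ → ℝ)
    (hmono : MonotoneOn F (Set.Icc 0 (d ^ 2)))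
    (hnonneg : ∀ t ∈ Set.Icc 0 (d ^ 2), 0 ≤ F t)
    (hpos : ∀ t ∈ Set.Ioc 0 (d ^ 2), 0 < F t)
    (hlog : ∫⁻ t in Set.Ioc (0 : ℝ) d,
        ENNReal.ofReal |Real.log t * Real.log (F (t ^ 2))| < ⊤) :
    ∀ δ ∈ Set.Ioo (0 : ℝ) (min d 1),
      ∫⁻ x in Set.Ioc (0 : ℝ) δ, ∫⁻ t in Set.Ioc (0 : ℝ) δ, ∫⁻ y in Set.Ioc (0 : ℝ) δ,
        ENNReal.ofReal (1 / ((t + F (x ^ 2)) * (x + y))) < ⊤ := by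
  intro δ hδ
  obtain ⟨hδ0, hδm⟩ := hδ
  have hδd : δ < d := lt_of_lt_of_le hδm (min_le_left _ _)
  have hδ1 : δ < 1 := lt_of_lt_of_le hδm (min_le_right _ _)
  have hd2 : d ^ 2 ∈ Set.Icc 0 (d ^ 2) := ⟨by positivity, le_rfl⟩
  have hM : 0 ≤ F (d ^ 2) := hnonneg _ hd2
  set M := F (d ^ 2) with hMdef
  set K := Real.log (1 + M) with hK
  have hK0 : 0 ≤ K := Real.log_nonneg (by linarith)
  have hlδ : 0 < -Real.log δ := by
    have := Real.log_neg hδ0 hδ1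
    linarith
  set C := 1 + Real.log 2 / (-Real.log δ) with hC
  have hl2 : 0 < Real.log 2 := Real.log_pos (by norm_num)
  have hC0 : 0 ≤ C := by positivity
  have hlogint : ∫⁻ x in Set.Ioc (0 : ℝ) δ, ENNReal.ofReal |Real.log x| < ⊤ := by
    have h1 : IntegrableOn Real.log (Set.Ioc 0 δ) :=
      (intervalIntegrable_iff_integrableOn_Ioc_of_le hδ0.le).1
        intervalIntegral.intervalIntegrable_log'
    exact h1.abs.lintegral_lt_top
  have hlog' : ∫⁻ t in Set.Ioc (0 : ℝ) δ,
        ENNReal.ofReal |Real.log t * Real.log (F (t ^ 2))| < ⊤ :=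
    lt_of_le_of_lt (lintegral_mono_set (Set.Ioc_subset_Ioc_right hδd.le)) hlog
  have hle : ∫⁻ x in Set.Ioc (0 : ℝ) δ, ∫⁻ t in Set.Ioc (0 : ℝ) δ, ∫⁻ y in Set.Ioc (0 : ℝ) δ,
        ENNReal.ofReal (1 / ((t + F (x ^ 2)) * (x + y))) ≤
      ∫⁻ x in Set.Ioc (0 : ℝ) δ, (ENNReal.ofReal (C * K) * ENNReal.ofReal |Real.log x| +
        ENNReal.ofReal C * ENNReal.ofReal |Real.log x * Real.log (F (x ^ 2))|) := by
    apply setLIntegral_mono' measurableSet_Ioc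
    intro x hx
    obtain ⟨hx0, hxδ⟩ := hx
    have hx2 : x ^ 2 ∈ Set.Ioc 0 (d ^ 2) :=
      ⟨by positivity, by apply pow_le_pow_left₀ hx0.le; linarith⟩
    have hF : 0 < F (x ^ 2) := hpos _ hx2
    have hFM : F (x ^ 2) ≤ M := hmono (Set.Ioc_subset_Icc_self hx2) hd2 hx2.2
    set f := F (x ^ 2) with hf
    have e1 : ∫⁻ t in Set.Ioc (0 : ℝ) δ, ∫⁻ y in Set.Ioc (0 : ℝ) δ,
        ENNReal.ofReal (1 / ((t + f) * (x + y))) =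
        ENNReal.ofReal (Real.log ((δ + f) / f)) * ENNReal.ofReal (Real.log ((δ + x) / x)) := by
      rw [← aux_int f δ hF hδ0, ← aux_int x δ hx0 hδ0, ← lintegral_mul_const']
      · apply setLIntegral_congr_fun measurableSet_Ioc
        intro t ht
        have ht0 : 0 < t := ht.1
        simp only
        rw [← lintegral_const_mul' _ _ ENNReal.ofReal_ne_top]
        congr 1
        funext y
        rw [← ENNReal.ofReal_mul (by positivity)]
        congr 1
        rw [one_div_mul_one_div, add_comm x y]
      · rw [aux_int x δ hx0 hδ0]
        exact ENNReal.ofReal_ne_top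
    rw [e1]
    have hlx : Real.log x ≤ Real.log δ := Real.log_le_log hx0 hxδ
    have habs : |Real.log x| = -Real.log x := abs_of_nonpos (by linarith)
    have b1 : Real.log ((δ + x) / x) ≤ C * |Real.log x| := by
      rw [Real.log_div (by positivity) hx0.ne', habs]
      have h1 : Real.log (δ + x) ≤ Real.log 2 := Real.log_le_log (by positivity) (by linarith)
      have h2 : Real.log 2 ≤ Real.log 2 / (-Real.log δ) * (-Real.log x) := by
        rw [div_mul_eq_mul_div, le_div_iff₀ hlδ]
        apply mul_le_mul_of_nonneg_left _ hl2.le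
        linarith
      rw [hC, add_mul]
      linarith
    have b2 : Real.log ((δ + f) / f) ≤ K + |Real.log f| := by
      rw [Real.log_div (by positivity) hF.ne']
      have h1 : Real.log (δ + f) ≤ K := Real.log_le_log (by positivity) (by linarith)
      have := neg_abs_le (Real.log f)
      linarith
    have n2 : 0 ≤ Real.log ((δ + f) / f) :=
      Real.log_nonneg (by rw [le_div_iff₀ hF]; linarith)
    have n1 : 0 ≤ Real.log ((δ + x) / x) :=
      Real.log_nonneg (by rw [le_div_iff₀ hx0]; linarith)
    rw [← ENNReal.ofReal_mul n2, ← ENNReal.ofReal_mul (by positivity), ← ENNReal.ofReal_mul hC0,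
      ← ENNReal.ofReal_add (by positivity) (by positivity)]
    apply ENNReal.ofReal_le_ofReal
    calc _ ≤ (K + |Real.log f|) * (C * |Real.log x|) :=
          mul_le_mul b2 b1 n1 (by positivity)
      _ = _ := by rw [abs_mul]; ring
  refine lt_of_le_of_lt hle ?_
  rw [lintegral_add_left (by fun_prop), lintegral_const_mul' _ _ ENNReal.ofReal_ne_top,
    lintegral_const_mul' _ _ ENNReal.ofReal_ne_top]
  exact ENNReal.add_lt_top.2 ⟨ENNReal.mul_lt_top ENNReal.ofReal_lt_top hlogint,
    ENNReal.mul_lt_top ENNReal.ofReal_lt_top hlog'⟩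
end

section
/- Let Ω ⊂ ℂ² be an open convex set containing 0. For j, k ∈ {1,2} let α_{jk} : Ω → ℂ be smooth functions satisfying the Hermitian symmetry α_{kj} = conj(α_{jk}) and the d-closedness relations ∂α_{jk}/∂z_l = ∂α_{lk}/∂z_j and ∂α_{jk}/∂z̄_l = ∂α_{jl}/∂z̄_k on Ω for all j, k, l ∈ {1,2}. Define f_k(z) = Σ_{j=1}^{2} z_j ∫₀¹ t·α_{jk}(t z) dt for z ∈ Ω, k ∈ {1,2}. Then on Ω: (i) ∂f_k/∂z̄_l = ∂f_l/∂z̄_k for all k, l ∈ {1,2} (i.e. the (0,1)-form f = f₁ dz̄₁ + f₂ dz̄₂ is ∂̄-closed), and (ii) ∂f_k/∂z_j + conj(∂f_j/∂z_k) = α_{jk} for all j, k ∈ {1,2} (i.e. ∂f − ∂̄f̄ = Σ α_{jk} dz_j ∧ dz̄_k). -/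
open Complex Set MeasureTheory

/-- Standard basis vectors of `ℂ²`. -/
def bv (j : Fin 2) : ℂ × ℂ := if j = 0 then (1, 0) else (0, 1)

/-- The basis vectors multiplied by `i`. -/
def ibv (j : Fin 2) : ℂ × ℂ := if j = 0 then (Complex.I, 0) else (0, Complex.I)

/-- The `j`-th coordinate of a point of `ℂ²`. -/
def coordC (j : Fin 2) (z : ℂ × ℂ) : ℂ := if j = 0 then z.1 else z.2

/-- The Wirtinger derivative `∂g/∂z_j` of a complex-valued function on `ℂ²`,
defined via the real Fréchet derivative. -/
noncomputable def wz (j : Fin 2) (g : ℂ × ℂ → ℂ) (ζ : ℂ × ℂ) : ℂ :=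
  (1 / 2 : ℂ) * ((fderiv ℝ g ζ) (bv j) - Complex.I * (fderiv ℝ g ζ) (ibv j))

/-- The Wirtinger derivative `∂g/∂z̄_j` of a complex-valued function on `ℂ²`. -/
noncomputable def wzbar (j : Fin 2) (g : ℂ × ℂ → ℂ) (ζ : ℂ × ℂ) : ℂ :=
  (1 / 2 : ℂ) * ((fderiv ℝ g ζ) (bv j) + Complex.I * (fderiv ℝ g ζ) (ibv j))

/-- The Rudin radial primitive `f_k(z) = Σ_j z_j ∫₀¹ t·α_{jk}(tz) dt`. -/
noncomputable def rudinF (α : Fin 2 → Fin 2 → ℂ × ℂ → ℂ) (k : Fin 2) (z : ℂ × ℂ) : ℂ :=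
  ∑ j : Fin 2, coordC j z * ∫ t in (0 : ℝ)..1, (t : ℂ) * α j k (t • z)

lemma smul_mem_Om {Ω : Set (ℂ × ℂ)} (hconv : Convex ℝ Ω) (h0 : (0 : ℂ × ℂ) ∈ Ω) {z : ℂ × ℂ}
    (hz : z ∈ Ω) {t : ℝ} (ht : t ∈ Icc (0:ℝ) 1) : t • z ∈ Ω :=
  hconv.smul_mem_of_zero_mem h0 hz ht

lemma cont_ray {E : Type*} [TopologicalSpace E] {Ω : Set (ℂ × ℂ)} (hconv : Convex ℝ Ω)
    (h0 : (0 : ℂ × ℂ) ∈ Ω) {z : ℂ × ℂ} (hz : z ∈ Ω) {g : ℂ × ℂ → E} (hg : ContinuousOn g Ω) :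
    ContinuousOn (fun t : ℝ => g (t • z)) (Icc 0 1) :=
  hg.comp (by fun_prop) (fun _ ht => smul_mem_Om hconv h0 hz ht)

lemma key_deriv {Ω : Set (ℂ × ℂ)} (hopen : IsOpen Ω) (hconv : Convex ℝ Ω)
    (h0 : (0 : ℂ × ℂ) ∈ Ω) {g : ℂ × ℂ → ℂ} (hg : ContDiffOn ℝ (⊤ : ℕ∞) g Ω) {z : ℂ × ℂ}
    (hz : z ∈ Ω) :
    HasFDerivAt (fun w : ℂ × ℂ => ∫ t in (0:ℝ)..1, (t : ℂ) * g (t • w))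
      (∫ t in (0:ℝ)..1, (t ^ 2 : ℝ) • fderiv ℝ g (t • z)) z := by
  have hfc : ContinuousOn (fderiv ℝ g) Ω := hg.continuousOn_fderiv_of_isOpen hopen (by simp)
  have hgc : ContinuousOn g Ω := hg.continuousOn
  obtain ⟨ε, hε, hball⟩ := Metric.nhds_basis_closedBall.mem_iff.1 (hopen.mem_nhds hz)
  have hK : IsCompact ((fun p : ℝ × (ℂ × ℂ) => p.1 • p.2) '' (Icc (0:ℝ) 1 ×ˢ Metric.closedBall z ε)) :=
    (isCompact_Icc.prod (isCompact_closedBall z ε)).image (by fun_prop)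
  have hKΩ : ((fun p : ℝ × (ℂ × ℂ) => p.1 • p.2) '' (Icc (0:ℝ) 1 ×ˢ Metric.closedBall z ε)) ⊆ Ω := by
    rintro _ ⟨⟨t, w⟩, ⟨ht, hw⟩, rfl⟩
    exact smul_mem_Om hconv h0 (hball hw) ht
  obtain ⟨C, hC⟩ := hK.exists_bound_of_continuousOn (hfc.mono hKΩ)
  have hci : ∀ w ∈ Ω, ContinuousOn (fun t : ℝ => (t : ℂ) * g (t • w)) (Icc 0 1) := fun w hw =>
    (Complex.continuous_ofReal.continuousOn).mul (cont_ray hconv h0 hw hgc)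
  have hIoc : uIoc (0:ℝ) 1 = Ioc 0 1 := uIoc_of_le zero_le_one
  refine intervalIntegral.hasFDerivAt_integral_of_dominated_of_fderiv_le (𝕜 := ℝ)
    (F := fun w (t : ℝ) => (t : ℂ) * g (t • w))
    (F' := fun w (t : ℝ) => (t ^ 2 : ℝ) • fderiv ℝ g (t • w)) (bound := fun _ => C)
    (Metric.ball_mem_nhds z hε) ?_ ?_ ?_ ?_ ?_ ?_
  · filter_upwards [hopen.mem_nhds hz] with w hw
    rw [hIoc]
    exact ((hci w hw).mono Ioc_subset_Icc_self).aestronglyMeasurable measurableSet_Ioc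
  · exact ContinuousOn.intervalIntegrable (by rw [uIcc_of_le zero_le_one]; exact hci z hz)
  · rw [hIoc]
    refine ContinuousOn.aestronglyMeasurable ?_ measurableSet_Ioc
    refine ContinuousOn.mono ?_ Ioc_subset_Icc_self
    exact ContinuousOn.smul (f := fun t : ℝ => t ^ 2) (by fun_prop) (cont_ray hconv h0 hz hfc)
  · refine Filter.Eventually.of_forall fun t ht w hw => ?_
    rw [hIoc] at ht
    have h1 := hC _ ⟨(t, w), ⟨Ioc_subset_Icc_self ht, Metric.ball_subset_closedBall hw⟩, rfl⟩
    rw [norm_smul, Real.norm_of_nonneg (by positivity)]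
    have : t ^ 2 ≤ 1 := pow_le_one₀ ht.1.le ht.2
    calc t ^ 2 * ‖fderiv ℝ g (t • w)‖ ≤ 1 * ‖fderiv ℝ g (t • w)‖ := by gcongr
      _ ≤ C := by simpa using h1
  · simp
  · refine Filter.Eventually.of_forall fun t ht w hw => ?_
    rw [hIoc] at ht
    have hm : t • w ∈ Ω := smul_mem_Om hconv h0 (hball (Metric.ball_subset_closedBall hw))
      (Ioc_subset_Icc_self ht)
    have hd : HasFDerivAt g (fderiv ℝ g (t • w)) (t • w) :=
      ((hg.contDiffAt (hopen.mem_nhds hm)).differentiableAt (by simp)).hasFDerivAt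
    have h2 : HasFDerivAt (fun w : ℂ × ℂ => t • w) (t • ContinuousLinearMap.id ℝ (ℂ × ℂ)) w :=
      (hasFDerivAt_id w).const_smul t
    have h3 := (hd.comp w h2).const_mul (t : ℂ)
    refine HasFDerivAt.congr_fderiv h3 (ContinuousLinearMap.ext fun v => ?_)
    simp [pow_two, mul_assoc]

lemma clm_decomp (L : ℂ × ℂ →L[ℝ] ℂ) (v : ℂ × ℂ) :
    L v = ∑ m : Fin 2, (coordC m v * ((1 / 2 : ℂ) * (L (bv m) - I * L (ibv m)))
      + starRingEnd ℂ (coordC m v) * ((1 / 2 : ℂ) * (L (bv m) + I * L (ibv m)))) := by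
  have hv : v = v.1.re • bv 0 + v.1.im • ibv 0 + v.2.re • bv 1 + v.2.im • ibv 1 := by
    ext <;> simp [bv, ibv]
  have h1 : v.1 = v.1.re + v.1.im * I := (re_add_im _).symm
  have h2 : v.2 = v.2.re + v.2.im * I := (re_add_im _).symm
  have : L v = v.1.re * L (bv 0) + v.1.im * L (ibv 0) + v.2.re * L (bv 1) + v.2.im * L (ibv 1) := by
    conv_lhs => rw [hv]
    simp
  rw [this]
  simp only [Fin.sum_univ_two, coordC]
  simp only [if_true, one_ne_zero, if_false]
  generalize v.1.re = a at *
  generalize v.1.im = b at *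
  generalize v.2.re = c at *
  generalize v.2.im = d at *
  rw [h1, h2]
  simp only [map_add, map_mul, conj_ofReal, conj_I]
  linear_combination (b * L (ibv 0) + d * L (ibv 1)) * I_sq

lemma hasFDeriv_coord (j : Fin 2) (z : ℂ × ℂ) :
    ∃ L : ℂ × ℂ →L[ℝ] ℂ, (∀ v, L v = coordC j v) ∧ HasFDerivAt (coordC j) L z := by
  by_cases h : j = 0
  · refine ⟨ContinuousLinearMap.fst ℝ ℂ ℂ, fun v => by simp [coordC, h], ?_⟩
    have : coordC j = fun v => v.1 := by ext v; simp [coordC, h]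
    rw [this]; exact hasFDerivAt_fst
  · refine ⟨ContinuousLinearMap.snd ℝ ℂ ℂ, fun v => by simp [coordC, h], ?_⟩
    have : coordC j = fun v => v.2 := by ext v; simp [coordC, h]
    rw [this]; exact hasFDerivAt_snd

section main
variable {Ω : Set (ℂ × ℂ)} {α : Fin 2 → Fin 2 → ℂ × ℂ → ℂ}

lemma int_fd (hopen : IsOpen Ω) (hconv : Convex ℝ Ω) (h0 : (0 : ℂ × ℂ) ∈ Ω)
    {g : ℂ × ℂ → ℂ} (hg : ContDiffOn ℝ (⊤ : ℕ∞) g Ω) {z : ℂ × ℂ} (hz : z ∈ Ω) :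
    IntervalIntegrable (fun t : ℝ => (t ^ 2 : ℝ) • fderiv ℝ g (t • z)) volume 0 1 := by
  have hfc : ContinuousOn (fderiv ℝ g) Ω := hg.continuousOn_fderiv_of_isOpen hopen (by simp)
  refine ContinuousOn.intervalIntegrable ?_
  rw [uIcc_of_le zero_le_one]
  exact ContinuousOn.smul (f := fun t : ℝ => t ^ 2) (by fun_prop) (cont_ray hconv h0 hz hfc)

lemma ii_apply {F : ℝ → (ℂ × ℂ →L[ℝ] ℂ)} (hi : IntervalIntegrable F volume 0 1) (v : ℂ × ℂ) :
    IntervalIntegrable (fun t => F t v) volume 0 1 :=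
  ⟨hi.1.apply_continuousLinearMap v, hi.2.apply_continuousLinearMap v⟩

lemma fderiv_rudin (hopen : IsOpen Ω) (hconv : Convex ℝ Ω) (h0 : (0 : ℂ × ℂ) ∈ Ω)
    (hsmooth : ∀ j k : Fin 2, ContDiffOn ℝ (⊤ : ℕ∞) (α j k) Ω)
    (k : Fin 2) {z : ℂ × ℂ} (hz : z ∈ Ω) (v : ℂ × ℂ) :
    fderiv ℝ (rudinF α k) z v = ∑ j : Fin 2,
      (coordC j v * (∫ t in (0:ℝ)..1, (t : ℂ) * α j k (t • z)) +
       coordC j z * ((∫ t in (0:ℝ)..1, (t ^ 2 : ℝ) • fderiv ℝ (α j k) (t • z)) v)) := by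
  choose L hL hL' using fun j => hasFDeriv_coord j z
  have h := HasFDerivAt.fun_sum (u := Finset.univ) fun (j : Fin 2) _ =>
    (hL' j).mul (key_deriv hopen hconv h0 (hsmooth j k) hz)
  have h' : HasFDerivAt (rudinF α k) _ z := h
  rw [h'.fderiv]
  simp only [sum_apply, add_apply,
    smul_apply, hL, smul_eq_mul]
  refine Finset.sum_congr rfl fun j _ => by ring

lemma wz_int (hopen : IsOpen Ω) (hconv : Convex ℝ Ω) (h0 : (0 : ℂ × ℂ) ∈ Ω)
    {g : ℂ × ℂ → ℂ} (hg : ContDiffOn ℝ (⊤ : ℕ∞) g Ω) {z : ℂ × ℂ} (hz : z ∈ Ω) (m : Fin 2) :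
    (1 / 2 : ℂ) * ((∫ t in (0:ℝ)..1, (t ^ 2 : ℝ) • fderiv ℝ g (t • z)) (bv m)
      - I * (∫ t in (0:ℝ)..1, (t ^ 2 : ℝ) • fderiv ℝ g (t • z)) (ibv m))
      = ∫ t in (0:ℝ)..1, (t ^ 2 : ℂ) * wz m g (t • z) := by
  have hi := int_fd hopen hconv h0 hg hz
  rw [ContinuousLinearMap.intervalIntegral_apply hi, ContinuousLinearMap.intervalIntegral_apply hi,
    ← intervalIntegral.integral_const_mul, ← intervalIntegral.integral_sub,
    ← intervalIntegral.integral_const_mul]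
  · refine intervalIntegral.integral_congr fun t _ => ?_
    simp [wz]; ring
  · exact ii_apply hi _
  · exact (ii_apply hi _).const_mul _

lemma wzbar_int (hopen : IsOpen Ω) (hconv : Convex ℝ Ω) (h0 : (0 : ℂ × ℂ) ∈ Ω)
    {g : ℂ × ℂ → ℂ} (hg : ContDiffOn ℝ (⊤ : ℕ∞) g Ω) {z : ℂ × ℂ} (hz : z ∈ Ω) (m : Fin 2) :
    (1 / 2 : ℂ) * ((∫ t in (0:ℝ)..1, (t ^ 2 : ℝ) • fderiv ℝ g (t • z)) (bv m)
      + I * (∫ t in (0:ℝ)..1, (t ^ 2 : ℝ) • fderiv ℝ g (t • z)) (ibv m))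
      = ∫ t in (0:ℝ)..1, (t ^ 2 : ℂ) * wzbar m g (t • z) := by
  have hi := int_fd hopen hconv h0 hg hz
  rw [ContinuousLinearMap.intervalIntegral_apply hi, ContinuousLinearMap.intervalIntegral_apply hi,
    ← intervalIntegral.integral_const_mul, ← intervalIntegral.integral_add,
    ← intervalIntegral.integral_const_mul]
  · refine intervalIntegral.integral_congr fun t _ => ?_
    simp [wzbar]; ring
  · exact ii_apply hi _
  · exact (ii_apply hi _).const_mul _

lemma wz_rudin (hopen : IsOpen Ω) (hconv : Convex ℝ Ω) (h0 : (0 : ℂ × ℂ) ∈ Ω)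
    (hsmooth : ∀ j k : Fin 2, ContDiffOn ℝ (⊤ : ℕ∞) (α j k) Ω)
    (l k : Fin 2) {z : ℂ × ℂ} (hz : z ∈ Ω) :
    wz l (rudinF α k) z = (∫ t in (0:ℝ)..1, (t : ℂ) * α l k (t • z)) +
      ∑ j : Fin 2, coordC j z * ∫ t in (0:ℝ)..1, (t ^ 2 : ℂ) * wz l (α j k) (t • z) := by
  unfold wz
  simp only [fderiv_rudin hopen hconv h0 hsmooth k hz]
  have h := fun j => wz_int hopen hconv h0 (hsmooth j k) hz l
  unfold wz at h
  simp only [← h]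
  fin_cases l <;> simp [Fin.sum_univ_two, coordC, bv, ibv] <;> 
    linear_combination (-1 / 2 * ∫ t in (0:ℝ)..1, (t : ℂ) * α _ k (t • z)) * I_sq

lemma wzbar_rudin (hopen : IsOpen Ω) (hconv : Convex ℝ Ω) (h0 : (0 : ℂ × ℂ) ∈ Ω)
    (hsmooth : ∀ j k : Fin 2, ContDiffOn ℝ (⊤ : ℕ∞) (α j k) Ω)
    (l k : Fin 2) {z : ℂ × ℂ} (hz : z ∈ Ω) :
    wzbar l (rudinF α k) z = 
      ∑ j : Fin 2, coordC j z * ∫ t in (0:ℝ)..1, (t ^ 2 : ℂ) * wzbar l (α j k) (t • z) := by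
  unfold wzbar
  simp only [fderiv_rudin hopen hconv h0 hsmooth k hz]
  have h := fun j => wzbar_int hopen hconv h0 (hsmooth j k) hz l
  unfold wzbar at h
  simp only [← h]
  fin_cases l <;> simp [Fin.sum_univ_two, coordC, bv, ibv] <;> 
    linear_combination (1 / 2 * ∫ t in (0:ℝ)..1, (t : ℂ) * α _ k (t • z)) * I_sq

lemma conj_int (f : ℝ → ℂ) : starRingEnd ℂ (∫ t in (0:ℝ)..1, f t)
    = ∫ t in (0:ℝ)..1, starRingEnd ℂ (f t) := by
  rw [intervalIntegral.integral_of_le zero_le_one, intervalIntegral.integral_of_le zero_le_one,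
    integral_conj]

lemma conj_wz (hopen : IsOpen Ω) {g h : ℂ × ℂ → ℂ} (hg : ContDiffOn ℝ (⊤ : ℕ∞) g Ω)
    (hgh : ∀ z ∈ Ω, h z = starRingEnd ℂ (g z)) {z : ℂ × ℂ} (hz : z ∈ Ω) (m : Fin 2) :
    starRingEnd ℂ (wz m g z) = wzbar m h z := by
  have hd : HasFDerivAt g (fderiv ℝ g z) z :=
      ((hg.contDiffAt (hopen.mem_nhds hz)).differentiableAt (by simp)).hasFDerivAt
  have h1 := (Complex.conjCLE.toContinuousLinearMap.hasFDerivAt (x := g z)).comp z hd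
  have h2 : h =ᶠ[nhds z] (Complex.conjCLE.toContinuousLinearMap ∘ g) := by
    filter_upwards [hopen.mem_nhds hz] with w hw
    simpa using hgh w hw
  have h3 := (h1.congr_of_eventuallyEq h2).fderiv
  unfold wz wzbar
  rw [h3]
  simp [map_ofNat]

lemma ftc (hopen : IsOpen Ω) (hconv : Convex ℝ Ω) (h0 : (0 : ℂ × ℂ) ∈ Ω)
    {g : ℂ × ℂ → ℂ} (hg : ContDiffOn ℝ (⊤ : ℕ∞) g Ω) {z : ℂ × ℂ} (hz : z ∈ Ω) :
    2 * (∫ t in (0:ℝ)..1, (t : ℂ) * g (t • z)) +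
      (∫ t in (0:ℝ)..1, (t ^ 2 : ℝ) • fderiv ℝ g (t • z)) z = g z := by
  have hi := int_fd hopen hconv h0 hg hz
  have hi' : IntervalIntegrable (fun t : ℝ => (t : ℂ) * g (t • z)) volume 0 1 := by
    refine ContinuousOn.intervalIntegrable ?_
    rw [uIcc_of_le zero_le_one]
    exact (Complex.continuous_ofReal.continuousOn).mul (cont_ray hconv h0 hz hg.continuousOn)
  rw [ContinuousLinearMap.intervalIntegral_apply hi, ← intervalIntegral.integral_const_mul,
    ← intervalIntegral.integral_add (hi'.const_mul _) (ii_apply hi _)]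
  rw [intervalIntegral.integral_eq_sub_of_hasDerivAt (f := fun t : ℝ => (t : ℂ) ^ 2 * g (t • z))]
  · simp
  · intro t ht
    rw [uIcc_of_le zero_le_one] at ht
    have hm := smul_mem_Om hconv h0 hz ht
    have hd : HasFDerivAt g (fderiv ℝ g (t • z)) (t • z) :=
      ((hg.contDiffAt (hopen.mem_nhds hm)).differentiableAt (by simp)).hasFDerivAt
    have h1 : HasDerivAt (fun t : ℝ => t • z) ((1:ℝ) • z) t := (hasDerivAt_id t).smul_const z
    have h2 := hd.comp_hasDerivAt t h1
    have h3 := ((Complex.ofRealCLM.hasDerivAt (x := t)).pow 2).mul h2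
    refine HasDerivAt.congr_deriv h3 ?_
    simp; ring
  · exact (hi'.const_mul _).add (ii_apply hi _)

end main

/-- on an open convex `Ω ∋ 0`, for smooth Hermitian `d`-closed data
`α_{jk}`, the form `f = f₁ dz̄₁ + f₂ dz̄₂` with `f_k(z) = Σ_j z_j ∫₀¹ t α_{jk}(tz) dt`
is `∂̄`-closed and satisfies `∂f − ∂̄f̄ = α`. -/
theorem stmt11 (Ω : Set (ℂ × ℂ)) (hopen : IsOpen Ω) (hconv : Convex ℝ Ω) (h0 : (0 : ℂ × ℂ) ∈ Ω)
    (α : Fin 2 → Fin 2 → ℂ × ℂ → ℂ)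
    (hsmooth : ∀ j k : Fin 2, ContDiffOn ℝ (⊤ : ℕ∞) (α j k) Ω)
    (hherm : ∀ j k : Fin 2, ∀ z ∈ Ω, α k j z = starRingEnd ℂ (α j k z))
    (hdz : ∀ j k l : Fin 2, ∀ z ∈ Ω, wz l (α j k) z = wz j (α l k) z)
    (hdzbar : ∀ j k l : Fin 2, ∀ z ∈ Ω, wzbar l (α j k) z = wzbar k (α j l) z) :
    (∀ k l : Fin 2, ∀ z ∈ Ω, wzbar l (rudinF α k) z = wzbar k (rudinF α l) z) ∧
      (∀ j k : Fin 2, ∀ z ∈ Ω,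
        wz j (rudinF α k) z + starRingEnd ℂ (wz k (rudinF α j) z) = α j k z) := by
  have hm : ∀ z ∈ Ω, ∀ t ∈ uIcc (0:ℝ) 1, t • z ∈ Ω := fun z hz t ht =>
    smul_mem_Om hconv h0 hz (by rwa [uIcc_of_le zero_le_one] at ht)
  refine ⟨fun k l z hz => ?_, fun j k z hz => ?_⟩
  · rw [wzbar_rudin hopen hconv h0 hsmooth l k hz, wzbar_rudin hopen hconv h0 hsmooth k l hz]
    refine Finset.sum_congr rfl fun j _ => ?_
    congr 1
    refine intervalIntegral.integral_congr fun t ht => ?_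
    simp only [hdzbar j k l _ (hm z hz t ht)]
  · rw [wz_rudin hopen hconv h0 hsmooth j k hz, wz_rudin hopen hconv h0 hsmooth k j hz]
    have e1 : ∀ m, (∫ t in (0:ℝ)..1, (t ^ 2 : ℂ) * wz j (α m k) (t • z))
        = ∫ t in (0:ℝ)..1, (t ^ 2 : ℂ) * wz m (α j k) (t • z) := fun m =>
      intervalIntegral.integral_congr fun t ht => by
        simp only [hdz m k j _ (hm z hz t ht)]
    have e2 : ∀ m, starRingEnd ℂ (∫ t in (0:ℝ)..1, (t ^ 2 : ℂ) * wz k (α m j) (t • z))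
        = ∫ t in (0:ℝ)..1, (t ^ 2 : ℂ) * wzbar m (α j k) (t • z) := fun m => by
      rw [conj_int]
      refine intervalIntegral.integral_congr fun t ht => ?_
      simp only [hdz m j k _ (hm z hz t ht), map_mul, map_pow, conj_ofReal,
        conj_wz hopen (hsmooth k j) (hherm k j) (hm z hz t ht)]
    have e3 : starRingEnd ℂ (∫ t in (0:ℝ)..1, (t : ℂ) * α k j (t • z))
        = ∫ t in (0:ℝ)..1, (t : ℂ) * α j k (t • z) := by
      rw [conj_int]
      refine intervalIntegral.integral_congr fun t ht => ?_
      simp only [map_mul, conj_ofReal, hherm k j _ (hm z hz t ht)]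
    have h := ftc hopen hconv h0 (hsmooth j k) hz
    rw [clm_decomp] at h
    simp only [wz_int hopen hconv h0 (hsmooth j k) hz,
      wzbar_int hopen hconv h0 (hsmooth j k) hz] at h
    simp only [map_add, map_sum, map_mul, e1, e2, e3]
    rw [← h]
    simp only [Fin.sum_univ_two]
    ring
end

section
/- Let Ω ⊂ ℂ² be a bounded open convex set with 0 ∈ Ω, and let r > 0. Then there exists a constant c > 0, depending only on Ω and r, such that for all continuous functions α_{jk} : closure(Ω) → ℂ (j, k ∈ {1,2}) that vanish identically on the ball B(0, r), the functions f_k(z) = Σ_{j=1}^{2} z_j ∫₀¹ t·α_{jk}(t z) dt satisfy ∫_Ω ( |f₁(z)| + |f₂(z)| ) dV(z) ≤ c · Σ_{j,k=1}^{2} ∫_Ω |α_{jk}(z)| dV(z), where dV is Lebesgue measure on ℂ² ≅ ℝ⁴. -/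
open Complex Set MeasureTheory

lemma scale_lintegral (g : ℂ × ℂ → ENNReal) (hg : Measurable g) (t : ℝ) (ht : t ≠ 0) :
    ∫⁻ z, g (t • z) =
      ENNReal.ofReal |(t ^ Module.finrank ℝ (ℂ × ℂ))⁻¹| * ∫⁻ z, g z := by
  have : (volume : Measure (ℂ × ℂ)).IsAddHaarMeasure :=
    Measure.prod.instIsAddHaarMeasure (volume : Measure ℂ) (volume : Measure ℂ)
  have h := Measure.map_addHaar_smul (volume : Measure (ℂ × ℂ)) ht
  have h2 : Measurable (fun z : ℂ × ℂ => t • z) := measurable_const_smul t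
  rw [← lintegral_map (f := g) hg h2, h, lintegral_smul_measure, smul_eq_mul]

lemma key_lintegral (g : ℂ × ℂ → ENNReal) (hg : Measurable g) (δ : ℝ) (hδ : 0 < δ) :
    ∫⁻ z, ∫⁻ t in Icc δ 1, g (t • z) ≤
      ENNReal.ofReal ((δ ^ Module.finrank ℝ (ℂ × ℂ))⁻¹) * ∫⁻ z, g z := by
  rw [lintegral_lintegral_swap]
  · calc ∫⁻ t in Icc δ 1, ∫⁻ z, g (t • z)
        ≤ ∫⁻ t in Icc δ 1,
            ENNReal.ofReal ((δ ^ Module.finrank ℝ (ℂ × ℂ))⁻¹) * ∫⁻ z, g z := by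
          apply setLIntegral_mono measurable_const
          intro t ht
          have ht0 : 0 < t := hδ.trans_le ht.1
          rw [scale_lintegral g hg t ht0.ne']
          gcongr
          rw [abs_of_nonneg (by positivity)]
          have := ht.1
          gcongr
      _ ≤ _ := by
          rw [setLIntegral_const, Real.volume_Icc]
          have : ENNReal.ofReal (1 - δ) ≤ 1 := by
            rw [← ENNReal.ofReal_one]; exact ENNReal.ofReal_le_ofReal (by linarith)
          exact mul_le_of_le_one_right' this
  · apply Measurable.aemeasurable
    exact hg.comp (measurable_snd.smul measurable_fst)

lemma pointwise_bound (Ω : Set (ℂ × ℂ)) (hconv : Convex ℝ Ω) (h0 : (0 : ℂ × ℂ) ∈ Ω)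
    (r R δ : ℝ) (hR : ∀ z ∈ Ω, ‖z‖ ≤ R) (hR0 : 0 < R) (hδ : δ * R ≤ r)
    (a : ℂ × ℂ → ℂ) (ha : ∀ z ∈ Metric.ball (0 : ℂ × ℂ) r, a z = 0)
    (z : ℂ × ℂ) (hz : z ∈ Ω) :
    ‖∫ t in (0 : ℝ)..1, (t : ℂ) * a (t • z)‖ₑ ≤
      ∫⁻ t in Icc δ 1, Ω.indicator (fun w => ‖a w‖ₑ) (t • z) := by
  rw [intervalIntegral.integral_of_le zero_le_one]
  refine (enorm_integral_le_lintegral_enorm _).trans ?_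
  rw [← lintegral_indicator measurableSet_Ioc, ← lintegral_indicator measurableSet_Icc]
  apply lintegral_mono
  intro t
  by_cases ht : t ∈ Ioc (0 : ℝ) 1
  · rw [indicator_of_mem ht]
    by_cases htd : δ ≤ t
    · have hm : t ∈ Icc δ 1 := ⟨htd, ht.2⟩
      have hw : t • z ∈ Ω := hconv.smul_mem_of_zero_mem h0 hz ⟨ht.1.le, ht.2⟩
      rw [indicator_of_mem hm, indicator_of_mem hw, enorm_mul]
      apply mul_le_of_le_one_left'
      rw [← ofReal_norm, ← ENNReal.ofReal_one]
      apply ENNReal.ofReal_le_ofReal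
      rw [Complex.norm_real, Real.norm_of_nonneg ht.1.le]
      exact ht.2
    · have : a (t • z) = 0 := by
        apply ha
        rw [mem_ball_zero_iff, norm_smul, Real.norm_of_nonneg ht.1.le]
        push Not at htd
        nlinarith [hR z hz, ht.1]
      simp [this]
  · rw [indicator_of_notMem ht]; exact zero_le

lemma coordC_enorm (j : Fin 2) (z : ℂ × ℂ) (R : ℝ) (h : ‖z‖ ≤ R) :
    ‖coordC j z‖ₑ ≤ ENNReal.ofReal R := by
  rw [← ofReal_norm]
  apply ENNReal.ofReal_le_ofReal
  unfold coordC
  split_ifs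
  · exact (norm_fst_le z).trans h
  · exact (norm_snd_le z).trans h

/-- on a bounded open convex `Ω ∋ 0` and for `r > 0` there is `c > 0`
such that for all continuous data `α_{jk}` on `closure Ω` vanishing on `B(0,r)`,
`∫_Ω (|f₁| + |f₂|) dV ≤ c Σ_{j,k} ∫_Ω |α_{jk}| dV`. -/
theorem stmt12 (Ω : Set (ℂ × ℂ)) (hopen : IsOpen Ω) (hconv : Convex ℝ Ω)
    (hbdd : Bornology.IsBounded Ω) (h0 : (0 : ℂ × ℂ) ∈ Ω) (r : ℝ) (hr : 0 < r) :
    ∃ c > (0 : ℝ), ∀ α : Fin 2 → Fin 2 → ℂ × ℂ → ℂ,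
      (∀ j k : Fin 2, ContinuousOn (α j k) (closure Ω)) →
      (∀ j k : Fin 2, ∀ z ∈ Metric.ball (0 : ℂ × ℂ) r, α j k z = 0) →
      ∫ z in Ω, (‖rudinF α 0 z‖ + ‖rudinF α 1 z‖) ≤
        c * ∑ j : Fin 2, ∑ k : Fin 2, ∫ z in Ω, ‖α j k z‖ := by
  obtain ⟨R, hR0, hR⟩ := hbdd.exists_pos_norm_le
  set δ := r / R with hδdef
  have hδ : 0 < δ := by positivity
  have hδR : δ * R ≤ r := by rw [hδdef, div_mul_cancel₀ _ hR0.ne']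
  set K := (δ ^ Module.finrank ℝ (ℂ × ℂ))⁻¹ with hK
  have hK0 : 0 < K := by positivity
  refine ⟨R * K, by positivity, ?_⟩
  intro α hα hv
  set g : Fin 2 → Fin 2 → ℂ × ℂ → ENNReal :=
    fun j k => Ω.indicator (fun w => ‖α j k w‖ₑ) with hgdef
  have hg : ∀ j k, Measurable (g j k) := by
    intro j k
    have h1 : ContinuousOn (fun w => ‖α j k w‖ₑ) Ω :=
      continuous_enorm.comp_continuousOn ((hα j k).mono subset_closure)
    classical
    have := h1.measurable_piecewise (g := (0 : ℂ × ℂ → ENNReal)) continuous_zero.continuousOn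
      hopen.measurableSet
    rwa [Set.piecewise_eq_indicator] at this
  have hint : ∀ j k, IntegrableOn (α j k) Ω := fun j k =>
    ((hα j k).integrableOn_compact hbdd.isCompact_closure).mono_set subset_closure
  have hgint : ∀ j k, ∫⁻ z, g j k z = ENNReal.ofReal (∫ z in Ω, ‖α j k z‖) := by
    intro j k
    rw [ofReal_integral_norm_eq_lintegral_enorm (hint j k),
      lintegral_indicator hopen.measurableSet]
  have hH : ∀ j k, Measurable (fun z : ℂ × ℂ => ∫⁻ t in Icc δ 1, g j k (t • z)) := by
    intro j k
    have h1 : Measurable (fun p : (ℂ × ℂ) × ℝ => g j k (p.2 • p.1)) :=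
      (hg j k).comp (measurable_snd.smul measurable_fst)
    exact h1.lintegral_prod_right'
  have hpt : ∀ z ∈ Ω, ∀ k, ‖rudinF α k z‖ₑ ≤
      ∑ j, ENNReal.ofReal R * ∫⁻ t in Icc δ 1, g j k (t • z) := by
    intro z hz k
    unfold rudinF
    refine (enorm_sum_le _ _).trans ?_
    apply Finset.sum_le_sum
    intro j _
    rw [enorm_mul]
    exact mul_le_mul' (coordC_enorm j z R (hR z hz))
      (pointwise_bound Ω hconv h0 r R δ hR hR0 hδR (α j k) (hv j k) z hz)
  have hnn : ∀ j k, 0 ≤ ∫ z in Ω, ‖α j k z‖ := fun j k => integral_nonneg fun _ => norm_nonneg _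
  have hmain : ‖∫ z in Ω, (‖rudinF α 0 z‖ + ‖rudinF α 1 z‖)‖ₑ ≤
      ENNReal.ofReal (R * K * ∑ j : Fin 2, ∑ k : Fin 2, ∫ z in Ω, ‖α j k z‖) := by
    calc _ ≤ ∫⁻ z in Ω, ‖‖rudinF α 0 z‖ + ‖rudinF α 1 z‖‖ₑ :=
          enorm_integral_le_lintegral_enorm _
      _ ≤ ∫⁻ z in Ω, ∑ k, ∑ j, ENNReal.ofReal R * ∫⁻ t in Icc δ 1, g j k (t • z) := by
          apply setLIntegral_mono' hopen.measurableSet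
          intro z hz
          refine (enorm_add_le _ _).trans ?_
          rw [enorm_norm, enorm_norm, Fin.sum_univ_two]
          exact add_le_add (hpt z hz 0) (hpt z hz 1)
      _ ≤ ∫⁻ z, ∑ k, ∑ j, ENNReal.ofReal R * ∫⁻ t in Icc δ 1, g j k (t • z) :=
          setLIntegral_le_lintegral _ _
      _ = ∑ k, ∑ j, ENNReal.ofReal R * ∫⁻ z, ∫⁻ t in Icc δ 1, g j k (t • z) := by
          rw [lintegral_finsetSum _ fun k _ =>
            Finset.measurable_sum _ fun j _ => (hH j k).const_mul _]
          refine Finset.sum_congr rfl fun k _ => ?_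
          rw [lintegral_finsetSum _ fun j _ => (hH j k).const_mul _]
          refine Finset.sum_congr rfl fun j _ => ?_
          rw [lintegral_const_mul _ (hH j k)]
      _ ≤ ∑ k, ∑ j, ENNReal.ofReal (R * K * ∫ z in Ω, ‖α j k z‖) := by
          refine Finset.sum_le_sum fun k _ => Finset.sum_le_sum fun j _ => ?_
          rw [mul_assoc, ENNReal.ofReal_mul hR0.le, ENNReal.ofReal_mul hK0.le, ← hgint]
          exact mul_le_mul' le_rfl (key_lintegral (g j k) (hg j k) δ hδ)
      _ = _ := by
          have hp : ∀ j k, 0 ≤ R * K * ∫ z in Ω, ‖α j k z‖ := fun j k =>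
            mul_nonneg (by positivity) (hnn j k)
          rw [Finset.sum_comm, Finset.mul_sum, ENNReal.ofReal_sum_of_nonneg]
          · refine Finset.sum_congr rfl fun j _ => ?_
            rw [Finset.mul_sum, ENNReal.ofReal_sum_of_nonneg fun k _ => hp j k]
          · intro j _
            rw [Finset.mul_sum]
            exact Finset.sum_nonneg fun k _ => hp j k
  rw [← ofReal_norm, ENNReal.ofReal_le_ofReal_iff] at hmain
  · exact (le_abs_self _).trans hmain
  · exact mul_nonneg (by positivity)
      (Finset.sum_nonneg fun j _ => Finset.sum_nonneg fun k _ => hnn j k)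
end

section
/- Let Ω ⊂ ℂ² be a bounded open convex set with 0 ∈ Ω, and let r > 0. Then there exists a constant c > 0, depending only on Ω and r, such that for all continuous functions α_{jk} : closure(Ω) → ℂ (j, k ∈ {1,2}) that vanish identically on the ball B(0, r), the functions f_k(z) = Σ_{j=1}^{2} z_j ∫₀¹ t·α_{jk}(t z) dt satisfy ∫_{bΩ} ( |f₁(z)| + |f₂(z)| ) dH³(z) ≤ c · Σ_{j,k=1}^{2} ∫_Ω |α_{jk}(z)| dV(z), where bΩ is the topological boundary of Ω, H³ is 3-dimensional Hausdorff measure on ℂ² ≅ ℝ⁴, and dV is Lebesgue measure on ℂ² ≅ ℝ⁴. -/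
open Complex Set MeasureTheory

open scoped ENNReal NNReal Topology Pointwise
open Filter

/-- Eilenberg's inequality for a real-valued Lipschitz function. -/
theorem eilenberg_aux {X : Type*} [MetricSpace X] [MeasurableSpace X] [BorelSpace X]
    (f : X → ℝ) (K : ℝ≥0) (hK0 : K ≠ 0) (hf : LipschitzWith K f) (A : Set X) :
    ∫⁻ t, μH[3] (A ∩ f ⁻¹' {t}) ≤ K * (μH[4] A : ℝ≥0∞) := by
  rw [← ENNReal.div_le_iff' (by simpa using hK0) (by simp)]
  refine le_of_forall_gt_imp_ge_of_dense fun b hb => ?_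
  rw [ENNReal.div_le_iff' (by simpa using hK0) (by simp)]
  have hcov : ∀ n : ℕ, ∃ U : ℕ → Set X, A ⊆ ⋃ i, U i ∧
      (∀ i, Metric.ediam (U i) ≤ ((n : ℝ≥0∞) + 1)⁻¹) ∧
      ∑' i, Metric.ediam (U i) ^ (4 : ℝ) ≤ b := by
    intro n
    have h1 : (0 : ℝ≥0∞) < ((n : ℝ≥0∞) + 1)⁻¹ := by
      rw [ENNReal.inv_pos]; exact (by finiteness)
    rw [Measure.hausdorffMeasure_apply] at hb
    have h2 := lt_of_le_of_lt (le_iSup₂ (f := fun (r : ℝ≥0∞) (_ : 0 < r) =>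
        ⨅ (t : ℕ → Set X) (_ : A ⊆ ⋃ n, t n) (_ : ∀ n, Metric.ediam (t n) ≤ r),
          ∑' n, ⨆ _ : (t n).Nonempty, Metric.ediam (t n) ^ (4 : ℝ)) _ h1) hb
    simp only [iInf_lt_iff] at h2
    obtain ⟨U, hU, hd, hs⟩ := h2
    refine ⟨U, hU, hd, le_trans (ENNReal.tsum_le_tsum fun i => ?_) hs.le⟩
    rcases (U i).eq_empty_or_nonempty with h | h
    · simp [h]
    · exact le_iSup (fun _ : (U i).Nonempty => Metric.ediam (U i) ^ (4 : ℝ)) h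
  choose U hU hd hs using hcov
  let G : ℕ → ℝ → ℝ≥0∞ := fun n t => ∑' i,
    (toMeasurable volume (f '' U n i)).indicator (fun _ => Metric.ediam (U n i) ^ (3 : ℝ)) t
  have hGm : ∀ n, Measurable (G n) := fun n => Measurable.ennreal_tsum fun i =>
    measurable_const.indicator (measurableSet_toMeasurable _ _)
  have hGi : ∀ n, ∫⁻ t, G n t ≤ K * b := by
    intro n
    rw [lintegral_tsum fun i =>
      (measurable_const.indicator (measurableSet_toMeasurable _ _)).aemeasurable]
    refine le_trans ?_ (mul_le_mul_right (hs n) (K : ℝ≥0∞))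
    rw [← ENNReal.tsum_mul_left]
    refine ENNReal.tsum_le_tsum fun i => ?_
    rw [lintegral_indicator_const (measurableSet_toMeasurable _ _), measure_toMeasurable]
    have h3 : volume (f '' U n i) ≤ K * Metric.ediam (U n i) :=
      (Real.volume_le_diam _).trans (hf.ediam_image_le _)
    calc _ ≤ Metric.ediam (U n i) ^ (3 : ℝ) * (K * Metric.ediam (U n i)) := by gcongr
      _ = K * (Metric.ediam (U n i) ^ (4 : ℝ)) := by
        have e3 : (3 : ℝ) = ((3 : ℕ) : ℝ) := by norm_num
        have e4 : (4 : ℝ) = ((4 : ℕ) : ℝ) := by norm_num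
        rw [e3, e4, ENNReal.rpow_natCast, ENNReal.rpow_natCast]; ring
  have hF : ∀ t, μH[3] (A ∩ f ⁻¹' {t}) ≤ liminf (fun n => G n t) atTop := by
    intro t
    have hr : Tendsto (fun n : ℕ => ((n : ℝ≥0∞) + 1)⁻¹) atTop (𝓝 0) := by
      have := (ENNReal.tendsto_inv_nat_nhds_zero).comp (tendsto_add_atTop_nat 1)
      refine this.congr fun n => by simp
    refine (Measure.hausdorffMeasure_le_liminf_tsum (ι := fun _ : ℕ => ℕ) 3 _ _ hr
      (fun n i => U n i ∩ f ⁻¹' {t}) (Eventually.of_forall fun n i =>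
        (Metric.ediam_mono inter_subset_left).trans (hd n i))
      (Eventually.of_forall fun n => ?_)).trans ?_
    · rw [← iUnion_inter]
      exact inter_subset_inter_left _ (hU n)
    · refine liminf_le_liminf (Eventually.of_forall fun n => ENNReal.tsum_le_tsum fun i => ?_)
      by_cases ht : t ∈ f '' U n i
      · rw [indicator_of_mem (subset_toMeasurable _ _ ht)]
        exact ENNReal.rpow_le_rpow (Metric.ediam_mono inter_subset_left) (by norm_num)
      · have : U n i ∩ f ⁻¹' {t} = ∅ := by
          ext x
          simp only [mem_inter_iff, mem_preimage, mem_singleton_iff, mem_empty_iff_false,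
            iff_false, not_and]
          exact fun hx hxt => ht ⟨x, hx, hxt⟩
        simp [this]
  calc ∫⁻ t, μH[3] (A ∩ f ⁻¹' {t}) ≤ ∫⁻ t, liminf (fun n => G n t) atTop := lintegral_mono hF
    _ ≤ liminf (fun n => ∫⁻ t, G n t) atTop := lintegral_liminf_le hGm
    _ ≤ liminf (fun _ : ℕ => (K : ℝ≥0∞) * b) atTop :=
      liminf_le_liminf (Eventually.of_forall hGi)
    _ = K * b := by simp

/-- `4`-dimensional Hausdorff measure is dominated by Lebesgue measure. -/
theorem hausdorff_four : ∃ C : ℝ≥0, (μH[4] : Measure (ℂ × ℂ)) = C • volume := by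
  have h : Module.finrank ℝ (ℂ × ℂ) = 4 := by simp
  have h2 : Measure.IsAddHaarMeasure (μH[4] : Measure (ℂ × ℂ)) := by
    have := isAddHaarMeasure_hausdorffMeasure (E := ℂ × ℂ)
    rw [h] at this
    exact_mod_cast this
  have h3 : Measure.IsAddHaarMeasure (volume : Measure (ℂ × ℂ)) := by
    rw [Measure.volume_eq_prod]
    exact Measure.prod.instIsAddHaarMeasure _ _
  exact ⟨_, Measure.isAddLeftInvariant_eq_smul _ _⟩

/-- Slices of the level sets of the gauge. -/
theorem slice_aux (Ω : Set (ℂ × ℂ)) (hconv : Convex ℝ Ω) (hn : Ω ∈ 𝓝 (0 : ℂ × ℂ))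
    (a : ℝ) (ha : 0 < a) (t : ℝ) (hat : a < t) (A : Set (ℂ × ℂ)) :
    μH[3] ({z | t • z ∈ A} ∩ frontier Ω) ≤
      (ENNReal.ofReal a ^ 3)⁻¹ * μH[3] (A ∩ gauge Ω ⁻¹' {t}) := by
  have ht : 0 < t := ha.trans hat
  have hsub : t • ({z | t • z ∈ A} ∩ frontier Ω) ⊆ A ∩ gauge Ω ⁻¹' {t} := by
    rintro _ ⟨z, ⟨hz, hzf⟩, rfl⟩
    refine ⟨hz, ?_⟩
    have := (gauge_eq_one_iff_mem_frontier hconv hn).2 hzf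
    simp [gauge_smul_of_nonneg ht.le, this]
  have h1 := measure_mono (μ := (μH[3] : Measure (ℂ × ℂ))) hsub
  rw [Measure.hausdorffMeasure_smul₀ (by norm_num) ht.ne'] at h1
  have h0 : ENNReal.ofReal a ^ 3 ≠ 0 := by simp [ha]
  have htop : ENNReal.ofReal a ^ 3 ≠ ∞ := by finiteness
  rw [mul_comm, ← div_eq_mul_inv, ENNReal.le_div_iff_mul_le (Or.inl h0) (Or.inl htop), mul_comm]
  refine le_trans ?_ h1
  rw [ENNReal.smul_def, smul_eq_mul]
  gcongr
  have e3 : (3 : ℝ) = ((3 : ℕ) : ℝ) := by norm_num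
  rw [e3, NNReal.rpow_natCast, ENNReal.coe_pow]
  gcongr
  rw [← enorm_eq_nnnorm, Real.enorm_eq_ofReal ht.le]
  exact ENNReal.ofReal_le_ofReal hat.le

theorem cone_aux (Ω : Set (ℂ × ℂ)) (hopen : IsOpen Ω) (hconv : Convex ℝ Ω)
    (hbdd : Bornology.IsBounded Ω) (h0 : (0 : ℂ × ℂ) ∈ Ω) (a : ℝ) (ha : 0 < a) :
    ∃ C : ℝ≥0, ∀ g : ℂ × ℂ → ℝ≥0∞, Measurable g →
      ∫⁻ z in frontier Ω, (∫⁻ t in Ioo a 1, g (t • z)) ∂μH[3] ≤ C * ∫⁻ z, g z := by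
  have hn : Ω ∈ 𝓝 (0 : ℂ × ℂ) := hopen.mem_nhds h0
  obtain ⟨K₀, hK₀⟩ := hconv.lipschitz_gauge hn
  obtain ⟨K, hK0, hK⟩ : ∃ K : ℝ≥0, K ≠ 0 ∧ LipschitzWith K (gauge Ω) :=
    ⟨K₀ + 1, by positivity, hK₀.weaken (by simp)⟩
  obtain ⟨C4, hC4⟩ := hausdorff_four
  have key : ∀ b : ℝ, 0 < b → ∀ A : Set (ℂ × ℂ),
      ∫⁻ t in Ioo b 1, μH[3] ({z | t • z ∈ A} ∩ frontier Ω) ≤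
        (ENNReal.ofReal b ^ 3)⁻¹ * (K * (C4 * volume A)) := by
    intro b hb A
    have htop : (ENNReal.ofReal b ^ 3)⁻¹ ≠ ∞ := by simp [hb]
    calc _ ≤ ∫⁻ t in Ioo b 1, (ENNReal.ofReal b ^ 3)⁻¹ * μH[3] (A ∩ gauge Ω ⁻¹' {t}) :=
          setLIntegral_mono' measurableSet_Ioo fun t ht =>
            slice_aux Ω hconv hn b hb t ht.1 A
      _ ≤ ∫⁻ t, (ENNReal.ofReal b ^ 3)⁻¹ * μH[3] (A ∩ gauge Ω ⁻¹' {t}) :=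
          setLIntegral_le_lintegral _ _
      _ = (ENNReal.ofReal b ^ 3)⁻¹ * ∫⁻ t, μH[3] (A ∩ gauge Ω ⁻¹' {t}) :=
          lintegral_const_mul' _ _ htop
      _ ≤ (ENNReal.ofReal b ^ 3)⁻¹ * (K * μH[4] A) := by
          gcongr
          exact eilenberg_aux _ K hK0 hK A
      _ = _ := by rw [hC4, Measure.smul_apply, ENNReal.smul_def, smul_eq_mul]
  have hfin : μH[3] (frontier Ω) < ∞ := by
    have h1 := key (1/2) (by norm_num) Ω
    have h2 : ∫⁻ t in Ioo (1/2 : ℝ) 1, μH[3] (frontier Ω) ≤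
        ∫⁻ t in Ioo (1/2 : ℝ) 1, μH[3] ({z | t • z ∈ Ω} ∩ frontier Ω) := by
      refine setLIntegral_mono' measurableSet_Ioo fun t ht => measure_mono fun z hz => ⟨?_, hz⟩
      have hg := (gauge_eq_one_iff_mem_frontier hconv hn).2 hz
      have : gauge Ω (t • z) < 1 := by
        have ht0 : 0 ≤ t := by linarith [ht.1]
        rw [gauge_smul_of_nonneg ht0, hg]; simpa using ht.2
      exact gauge_lt_one_subset_self hconv h0 (absorbent_nhds_zero hn) this
    have h3 := h2.trans h1
    rw [setLIntegral_const, Real.volume_Ioo] at h3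
    have hv : volume Ω < ∞ := hbdd.measure_lt_top
    have h4 : (ENNReal.ofReal (1/2) ^ 3)⁻¹ * (K * (C4 * volume Ω)) < ∞ := by
      refine ENNReal.mul_lt_top (by rw [ENNReal.inv_lt_top]; positivity) ?_
      exact ENNReal.mul_lt_top (by simp) (ENNReal.mul_lt_top (by simp) hv)
    have h5 := h3.trans_lt h4
    by_contra hcon
    rw [not_lt, top_le_iff] at hcon
    rw [hcon, ENNReal.top_mul (by norm_num)] at h5
    exact lt_irrefl _ h5
  have : IsFiniteMeasure ((μH[3] : Measure (ℂ × ℂ)).restrict (frontier Ω)) :=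
    ⟨by simpa using hfin⟩
  have htopa : (ENNReal.ofReal a ^ 3)⁻¹ ≠ ∞ := by simp [ha]
  lift (ENNReal.ofReal a ^ 3)⁻¹ to ℝ≥0 using htopa with q hq
  refine ⟨q * (K * C4), fun g hg => ?_⟩
  have hm : Measurable (fun p : ℝ × (ℂ × ℂ) => p.1 • p.2) := measurable_fst.smul measurable_snd
  have hle : ((volume.restrict (Ioo a 1)).prod
      ((μH[3] : Measure (ℂ × ℂ)).restrict (frontier Ω))).map
        (fun p : ℝ × (ℂ × ℂ) => p.1 • p.2) ≤ (q * (K * C4)) • volume := by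
    refine Measure.le_iff.2 fun A hA => ?_
    rw [Measure.map_apply hm hA, Measure.prod_apply (hm hA)]
    have h6 := key a ha A
    rw [← hq] at h6
    refine le_trans (le_of_eq ?_) (h6.trans (le_of_eq ?_))
    · refine lintegral_congr fun t => ?_
      rw [Measure.restrict_apply' isClosed_frontier.measurableSet]
      rfl
    · simp [ENNReal.smul_def, mul_assoc]
  rw [lintegral_lintegral_swap]
  · calc _ = ∫⁻ p, g (p.1 • p.2) ∂((volume.restrict (Ioo a 1)).prod
        ((μH[3] : Measure (ℂ × ℂ)).restrict (frontier Ω))) :=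
          (lintegral_prod _ (hg.comp hm).aemeasurable).symm
      _ = ∫⁻ z, g z ∂(((volume.restrict (Ioo a 1)).prod
        ((μH[3] : Measure (ℂ × ℂ)).restrict (frontier Ω))).map
          (fun p : ℝ × (ℂ × ℂ) => p.1 • p.2)) := (lintegral_map hg hm).symm
      _ ≤ ∫⁻ z, g z ∂((q * (K * C4)) • volume) := lintegral_mono' hle le_rfl
      _ = _ := by rw [lintegral_smul_measure, ENNReal.smul_def, smul_eq_mul]
  · exact (hg.comp (measurable_snd.smul measurable_fst)).aemeasurable

/-- Radial bound for one coefficient. -/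
theorem radial_aux (Ω : Set (ℂ × ℂ)) (hconv : Convex ℝ Ω) (hn : Ω ∈ 𝓝 (0 : ℂ × ℂ))
    (h0 : (0 : ℂ × ℂ) ∈ Ω) (r R a : ℝ) (hR : ∀ z ∈ frontier Ω, ‖z‖ ≤ R) (hR0 : 0 < R)
    (ha : 0 < a) (haR : a * R < r)
    (β : ℂ × ℂ → ℂ) (hβ : ∀ z ∈ Metric.ball (0 : ℂ × ℂ) r, β z = 0) (j : Fin 2)
    (z : ℂ × ℂ) (hz : z ∈ frontier Ω) :
    ‖coordC j z * ∫ t in (0 : ℝ)..1, (t : ℂ) * β (t • z)‖ₑ ≤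
      ENNReal.ofReal R * ∫⁻ t in Ioo a 1, Ω.indicator (fun w => ‖β w‖ₑ) (t • z) := by
  rw [enorm_mul]
  have hc : ‖coordC j z‖ₑ ≤ ENNReal.ofReal R := by
    rw [← ofReal_norm_eq_enorm]
    refine ENNReal.ofReal_le_ofReal (le_trans ?_ (hR z hz))
    unfold coordC
    split_ifs
    · exact norm_fst_le z
    · exact norm_snd_le z
  refine mul_le_mul' hc ?_
  rw [intervalIntegral.integral_of_le zero_le_one, integral_Ioc_eq_integral_Ioo]
  refine (enorm_integral_le_lintegral_enorm _).trans ?_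
  rw [← lintegral_indicator measurableSet_Ioo, ← lintegral_indicator measurableSet_Ioo]
  refine lintegral_mono fun t => ?_
  by_cases ht : t ∈ Ioo (0 : ℝ) 1
  swap
  · simp [indicator_of_notMem ht]
  rw [indicator_of_mem ht]
  have hg := (gauge_eq_one_iff_mem_frontier hconv hn).2 hz
  have hmem : t • z ∈ Ω := by
    have : gauge Ω (t • z) < 1 := by
      rw [gauge_smul_of_nonneg ht.1.le, hg]; simpa using ht.2
    exact gauge_lt_one_subset_self hconv h0 (absorbent_nhds_zero hn) this
  by_cases hta : a < t
  · rw [indicator_of_mem (show t ∈ Ioo a 1 from ⟨hta, ht.2⟩), indicator_of_mem hmem, enorm_mul]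
    refine mul_le_of_le_one_left' ?_
    rw [← ofReal_norm_eq_enorm, Complex.norm_real, Real.norm_of_nonneg ht.1.le]
    exact ENNReal.ofReal_le_one.2 ht.2.le
  · have : β (t • z) = 0 := by
      refine hβ _ ?_
      rw [mem_ball_zero_iff, norm_smul, Real.norm_of_nonneg ht.1.le]
      refine lt_of_le_of_lt ?_ haR
      exact mul_le_mul (not_lt.1 hta) (hR z hz) (norm_nonneg _) ha.le
    simp [this]

theorem stmt13 (Ω : Set (ℂ × ℂ)) (hopen : IsOpen Ω) (hconv : Convex ℝ Ω)
    (hbdd : Bornology.IsBounded Ω) (h0 : (0 : ℂ × ℂ) ∈ Ω) (r : ℝ) (hr : 0 < r) :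
    ∃ c > (0 : ℝ), ∀ α : Fin 2 → Fin 2 → ℂ × ℂ → ℂ,
      (∀ j k : Fin 2, ContinuousOn (α j k) (closure Ω)) →
      (∀ j k : Fin 2, ∀ z ∈ Metric.ball (0 : ℂ × ℂ) r, α j k z = 0) →
      ∫⁻ z in frontier Ω,
          ENNReal.ofReal (‖rudinF α 0 z‖ + ‖rudinF α 1 z‖) ∂μH[3] ≤
        ENNReal.ofReal c *
          ∑ j : Fin 2, ∑ k : Fin 2, ∫⁻ z in Ω, ENNReal.ofReal (‖α j k z‖) := by
  have hn : Ω ∈ 𝓝 (0 : ℂ × ℂ) := hopen.mem_nhds h0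
  obtain ⟨R, hR0, hR⟩ : ∃ R > (0 : ℝ), ∀ z ∈ frontier Ω, ‖z‖ ≤ R := by
    obtain ⟨R, hR0, hR⟩ := hbdd.closure.exists_pos_norm_le
    exact ⟨R, hR0, fun z hz => hR z (frontier_subset_closure hz)⟩
  obtain ⟨a, ha, haR⟩ : ∃ a > (0 : ℝ), a * R < r :=
    ⟨r / (2 * R), by positivity, by field_simp; linarith⟩
  obtain ⟨C, hC⟩ := cone_aux Ω hopen hconv hbdd h0 a ha
  refine ⟨R * (C + 1), by positivity, fun α hα hz => ?_⟩
  let g : Fin 2 → Fin 2 → ℂ × ℂ → ℝ≥0∞ := fun j k => Ω.indicator (fun w => ‖α j k w‖ₑ)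
  have hgm : ∀ j k, Measurable (g j k) := by
    intro j k
    have h1 : ContinuousOn (fun w => ‖α j k w‖ₑ) Ω :=
      continuous_enorm.comp_continuousOn ((hα j k).mono subset_closure)
    classical
    have h2 := h1.measurable_piecewise (g := fun _ => (0 : ℝ≥0∞)) continuousOn_const
      hopen.measurableSet
    have h3 := piecewise_eq_indicator (s := Ω) (f := fun w => ‖α j k w‖ₑ)
    change Measurable (Ω.indicator fun w => ‖α j k w‖ₑ)
    rw [← h3]
    exact h2
  have hIm : ∀ j k, Measurable fun z : ℂ × ℂ => ∫⁻ t in Ioo a 1, g j k (t • z) := fun j k =>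
    Measurable.lintegral_prod_right' (f := fun p : (ℂ × ℂ) × ℝ => g j k (p.2 • p.1))
      ((hgm j k).comp (measurable_snd.smul measurable_fst))
  have hf : ∀ k, ∀ z ∈ frontier Ω, ENNReal.ofReal ‖rudinF α k z‖ ≤
      ∑ j : Fin 2, ENNReal.ofReal R * ∫⁻ t in Ioo a 1, g j k (t • z) := by
    intro k z hzf
    rw [ofReal_norm_eq_enorm]
    refine (enorm_sum_le _ _).trans (Finset.sum_le_sum fun j _ => ?_)
    exact radial_aux Ω hconv hn h0 r R a hR hR0 ha haR (α j k) (hz j k) j z hzf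
  calc ∫⁻ z in frontier Ω, ENNReal.ofReal (‖rudinF α 0 z‖ + ‖rudinF α 1 z‖) ∂μH[3]
      ≤ ∫⁻ z in frontier Ω, (∑ k : Fin 2, ∑ j : Fin 2,
          ENNReal.ofReal R * ∫⁻ t in Ioo a 1, g j k (t • z)) ∂μH[3] := by
        refine setLIntegral_mono' isClosed_frontier.measurableSet fun z hzf => ?_
        rw [ENNReal.ofReal_add (norm_nonneg _) (norm_nonneg _), Fin.sum_univ_two (f := fun k => _)]
        exact add_le_add (hf 0 z hzf) (hf 1 z hzf)
    _ = ∑ k : Fin 2, ∑ j : Fin 2, ENNReal.ofReal R *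
          ∫⁻ z in frontier Ω, (∫⁻ t in Ioo a 1, g j k (t • z)) ∂μH[3] := by
        rw [lintegral_finsetSum _ fun k _ => Finset.measurable_sum _ fun j _ =>
          (hIm j k).const_mul _]
        refine Finset.sum_congr rfl fun k _ => ?_
        rw [lintegral_finsetSum _ fun j _ => (hIm j k).const_mul _]
        refine Finset.sum_congr rfl fun j _ => ?_
        rw [lintegral_const_mul _ (hIm j k)]
    _ ≤ ∑ k : Fin 2, ∑ j : Fin 2, ENNReal.ofReal (R * (C + 1)) *
          ∫⁻ z in Ω, ENNReal.ofReal (‖α j k z‖) := by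
        refine Finset.sum_le_sum fun k _ => Finset.sum_le_sum fun j _ => ?_
        rw [ENNReal.ofReal_mul hR0.le, mul_assoc]
        gcongr
        refine (hC _ (hgm j k)).trans ?_
        rw [lintegral_indicator hopen.measurableSet]
        simp only [ofReal_norm_eq_enorm]
        gcongr
        rw [← ENNReal.ofReal_coe_nnreal]
        exact ENNReal.ofReal_le_ofReal (by linarith)
    _ = _ := by
        rw [Finset.sum_comm]
        simp only [Finset.mul_sum]
end
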